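/- arXiv:1605.03995 — 6 statements merged into one kernel-verified Lean document; each statement's English description precedes it below -/
import Mathlib

section
/- There exists a Hopf algebra structure on K over k whose comultiplication, counit and antipode satisfy Δ(a) = a⊗a + b⊗c, Δ(b) = a⊗b + b⊗d, Δ(c) = c⊗a + d⊗c, Δ(d) = c⊗b + d⊗d, ε(a) = ε(d) = 1, ε(b) = ε(c) = 0, S(a) = d, S(b) = ξb, S(c) = −ξc, S(d) = a. -/
open scoped TensorProduct

/-- Generators of the Hopf algebra `K`. -/
inductive KGen : Type
  | a | b | c | d

open FreeAlgebra in
/-- The defining relations of the algebra `K`. -/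
inductive KRel (𝕜 : Type) [Field 𝕜] (ξ : 𝕜) :
    FreeAlgebra 𝕜 KGen → FreeAlgebra 𝕜 KGen → Prop
  | ab : KRel 𝕜 ξ (ι 𝕜 KGen.a * ι 𝕜 KGen.b) (ξ • (ι 𝕜 KGen.b * ι 𝕜 KGen.a))
  | ac : KRel 𝕜 ξ (ι 𝕜 KGen.a * ι 𝕜 KGen.c) (ξ • (ι 𝕜 KGen.c * ι 𝕜 KGen.a))
  | cb : KRel 𝕜 ξ (ι 𝕜 KGen.c * ι 𝕜 KGen.b) 0
  | bc : KRel 𝕜 ξ (ι 𝕜 KGen.b * ι 𝕜 KGen.c) 0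
  | cd : KRel 𝕜 ξ (ι 𝕜 KGen.c * ι 𝕜 KGen.d) (ξ • (ι 𝕜 KGen.d * ι 𝕜 KGen.c))
  | bd : KRel 𝕜 ξ (ι 𝕜 KGen.b * ι 𝕜 KGen.d) (ξ • (ι 𝕜 KGen.d * ι 𝕜 KGen.b))
  | adcomm : KRel 𝕜 ξ (ι 𝕜 KGen.a * ι 𝕜 KGen.d) (ι 𝕜 KGen.d * ι 𝕜 KGen.a)
  | adone : KRel 𝕜 ξ (ι 𝕜 KGen.a * ι 𝕜 KGen.d) 1
  | bsq : KRel 𝕜 ξ (ι 𝕜 KGen.b * ι 𝕜 KGen.b) 0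
  | csq : KRel 𝕜 ξ (ι 𝕜 KGen.c * ι 𝕜 KGen.c) 0
  | aac : KRel 𝕜 ξ (ι 𝕜 KGen.a * ι 𝕜 KGen.a * ι 𝕜 KGen.c) (ι 𝕜 KGen.b)
  | afour : KRel 𝕜 ξ (ι 𝕜 KGen.a ^ 4) 1

/-- The 8-dimensional algebra `K`, the smallest Hopf algebra whose coradical is not a
subalgebra, presented by generators and relations. -/
abbrev KAlg (𝕜 : Type) [Field 𝕜] (ξ : 𝕜) : Type := RingQuot (KRel 𝕜 ξ)

variable (𝕜 : Type) [Field 𝕜] (ξ : 𝕜)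

/-- The generator `a` of `K`. -/
noncomputable def kA : KAlg 𝕜 ξ := RingQuot.mkAlgHom 𝕜 (KRel 𝕜 ξ) (FreeAlgebra.ι 𝕜 KGen.a)
/-- The generator `b` of `K`. -/
noncomputable def kB : KAlg 𝕜 ξ := RingQuot.mkAlgHom 𝕜 (KRel 𝕜 ξ) (FreeAlgebra.ι 𝕜 KGen.b)
/-- The generator `c` of `K`. -/
noncomputable def kC : KAlg 𝕜 ξ := RingQuot.mkAlgHom 𝕜 (KRel 𝕜 ξ) (FreeAlgebra.ι 𝕜 KGen.c)
/-- The generator `d` of `K`. -/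
noncomputable def kD : KAlg 𝕜 ξ := RingQuot.mkAlgHom 𝕜 (KRel 𝕜 ξ) (FreeAlgebra.ι 𝕜 KGen.d)

/-- The comultiplication of `K` takes the prescribed values on the generators. -/
def KComulOn (Δ : KAlg 𝕜 ξ →ₐ[𝕜] KAlg 𝕜 ξ ⊗[𝕜] KAlg 𝕜 ξ) : Prop :=
  Δ (kA 𝕜 ξ) = kA 𝕜 ξ ⊗ₜ[𝕜] kA 𝕜 ξ + kB 𝕜 ξ ⊗ₜ[𝕜] kC 𝕜 ξ ∧
  Δ (kB 𝕜 ξ) = kA 𝕜 ξ ⊗ₜ[𝕜] kB 𝕜 ξ + kB 𝕜 ξ ⊗ₜ[𝕜] kD 𝕜 ξ ∧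
  Δ (kC 𝕜 ξ) = kC 𝕜 ξ ⊗ₜ[𝕜] kA 𝕜 ξ + kD 𝕜 ξ ⊗ₜ[𝕜] kC 𝕜 ξ ∧
  Δ (kD 𝕜 ξ) = kC 𝕜 ξ ⊗ₜ[𝕜] kB 𝕜 ξ + kD 𝕜 ξ ⊗ₜ[𝕜] kD 𝕜 ξ

/-- The counit of `K` takes the prescribed values on the generators. -/
def KCounitOn (ε : KAlg 𝕜 ξ →ₐ[𝕜] 𝕜) : Prop :=
  ε (kA 𝕜 ξ) = 1 ∧ ε (kB 𝕜 ξ) = 0 ∧ ε (kC 𝕜 ξ) = 0 ∧ ε (kD 𝕜 ξ) = 1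

section KHelpers

set_option linter.unusedSimpArgs false

variable {𝕜 ξ}

open FreeAlgebra

theorem kC_mul_kA (h : ξ * ξ = -1) : kC 𝕜 ξ * kA 𝕜 ξ = (-ξ) • (kA 𝕜 ξ * kC 𝕜 ξ) := by
  have := RingQuot.mkAlgHom_rel 𝕜 (KRel.ac (𝕜 := 𝕜) (ξ := ξ))
  simp only [map_mul, map_smul] at this
  change kA 𝕜 ξ * kC 𝕜 ξ = ξ • (kC 𝕜 ξ * kA 𝕜 ξ) at this
  rw [this, smul_smul, neg_mul, h, neg_neg, one_smul]

theorem kC_mul_kC : kC 𝕜 ξ * kC 𝕜 ξ = 0 := by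
  have := RingQuot.mkAlgHom_rel 𝕜 (KRel.csq (𝕜 := 𝕜) (ξ := ξ))
  simp only [map_mul, map_zero] at this
  exact this

theorem kB_eq : kB 𝕜 ξ = kA 𝕜 ξ * (kA 𝕜 ξ * kC 𝕜 ξ) := by
  have := RingQuot.mkAlgHom_rel 𝕜 (KRel.aac (𝕜 := 𝕜) (ξ := ξ))
  simp only [map_mul, mul_assoc] at this
  exact this.symm

theorem kA_four : kA 𝕜 ξ * (kA 𝕜 ξ * (kA 𝕜 ξ * kA 𝕜 ξ)) = 1 := by
  have := RingQuot.mkAlgHom_rel 𝕜 (KRel.afour (𝕜 := 𝕜) (ξ := ξ))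
  simp only [map_pow, map_one] at this
  change kA 𝕜 ξ ^ 4 = 1 at this
  rw [← this]; noncomm_ring

theorem kA_four' (x : KAlg 𝕜 ξ) :
    kA 𝕜 ξ * (kA 𝕜 ξ * (kA 𝕜 ξ * (kA 𝕜 ξ * x))) = x := by
  have := congrArg (· * x) (kA_four (𝕜 := 𝕜) (ξ := ξ))
  simpa only [mul_assoc, one_mul] using this

theorem kD_eq : kD 𝕜 ξ = kA 𝕜 ξ * (kA 𝕜 ξ * kA 𝕜 ξ) := by
  have := RingQuot.mkAlgHom_rel 𝕜 (KRel.adone (𝕜 := 𝕜) (ξ := ξ))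
  simp only [map_mul, map_one] at this
  change kA 𝕜 ξ * kD 𝕜 ξ = 1 at this
  rw [← kA_four' (kD 𝕜 ξ), this, mul_one]

theorem kC_mul_kA' (h : ξ * ξ = -1) (x : KAlg 𝕜 ξ) :
    kC 𝕜 ξ * (kA 𝕜 ξ * x) = (-ξ) • (kA 𝕜 ξ * (kC 𝕜 ξ * x)) := by
  rw [← mul_assoc, kC_mul_kA h, smul_mul_assoc, mul_assoc]

theorem kC_mul_kC' (x : KAlg 𝕜 ξ) : kC 𝕜 ξ * (kC 𝕜 ξ * x) = 0 := by
  rw [← mul_assoc, kC_mul_kC, zero_mul]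

/-- Values of the comultiplication on the generators. -/
noncomputable def kDeltaGen : KGen → KAlg 𝕜 ξ ⊗[𝕜] KAlg 𝕜 ξ
  | .a => kA 𝕜 ξ ⊗ₜ[𝕜] kA 𝕜 ξ + kB 𝕜 ξ ⊗ₜ[𝕜] kC 𝕜 ξ
  | .b => kA 𝕜 ξ ⊗ₜ[𝕜] kB 𝕜 ξ + kB 𝕜 ξ ⊗ₜ[𝕜] kD 𝕜 ξ
  | .c => kC 𝕜 ξ ⊗ₜ[𝕜] kA 𝕜 ξ + kD 𝕜 ξ ⊗ₜ[𝕜] kC 𝕜 ξ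
  | .d => kC 𝕜 ξ ⊗ₜ[𝕜] kB 𝕜 ξ + kD 𝕜 ξ ⊗ₜ[𝕜] kD 𝕜 ξ

/-- Values of the counit on the generators. -/
def kEpsGen : KGen → 𝕜
  | .a => 1
  | .b => 0
  | .c => 0
  | .d => 1

/-- Values of the antipode on the generators. -/
noncomputable def kSGen : KGen → (KAlg 𝕜 ξ)ᵐᵒᵖ
  | .a => .op (kD 𝕜 ξ)
  | .b => .op (ξ • kB 𝕜 ξ)
  | .c => .op ((-ξ) • kC 𝕜 ξ)
  | .d => .op (kA 𝕜 ξ)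

theorem mul_self_cancel (h : ξ * ξ = -1) (x : 𝕜) : ξ * (ξ * x) = -x := by
  rw [← mul_assoc, h]; simp

theorem kDelta_rel (h : ξ * ξ = -1) ⦃x y : FreeAlgebra 𝕜 KGen⦄ (hr : KRel 𝕜 ξ x y) :
    lift 𝕜 (kDeltaGen (𝕜 := 𝕜) (ξ := ξ)) x = lift 𝕜 kDeltaGen y := by
  cases hr <;>
  simp only [map_mul, map_smul, map_zero, map_one, map_pow, lift_ι_apply, kDeltaGen, kB_eq, kD_eq,
    pow_succ, pow_zero, one_mul,
    mul_add, add_mul, Algebra.TensorProduct.tmul_mul_tmul, mul_assoc, kC_mul_kA h, kC_mul_kA' h,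
    kC_mul_kC, kC_mul_kC', kA_four, kA_four', mul_smul_comm, smul_mul_assoc,
    TensorProduct.tmul_smul, ← TensorProduct.smul_tmul', smul_add, smul_smul, mul_zero, zero_mul,
    TensorProduct.tmul_zero, TensorProduct.zero_tmul, smul_zero, add_zero, zero_add,
    mul_one, ← Algebra.TensorProduct.one_def, mul_neg, neg_mul, neg_neg, h, mul_self_cancel h,
    one_smul] <;>
  module

theorem kEps_rel ⦃x y : FreeAlgebra 𝕜 KGen⦄ (hr : KRel 𝕜 ξ x y) :
    lift 𝕜 (kEpsGen (𝕜 := 𝕜)) x = lift 𝕜 kEpsGen y := by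
  cases hr <;> simp [kEpsGen]

theorem kS_rel (h : ξ * ξ = -1) ⦃x y : FreeAlgebra 𝕜 KGen⦄ (hr : KRel 𝕜 ξ x y) :
    lift 𝕜 (kSGen (𝕜 := 𝕜) (ξ := ξ)) x = lift 𝕜 kSGen y := by
  cases hr <;>
  simp only [map_mul, map_smul, map_zero, map_one, map_pow, lift_ι_apply, kSGen, kB_eq, kD_eq,
    pow_succ, pow_zero, one_mul, ← MulOpposite.op_mul, ← MulOpposite.op_smul,
    mul_assoc, kC_mul_kA h, kC_mul_kA' h,
    kC_mul_kC, kC_mul_kC', kA_four, kA_four', mul_smul_comm, smul_mul_assoc,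
    smul_add, smul_smul, mul_zero, zero_mul, mul_neg, neg_mul, neg_neg, h, mul_self_cancel h,
    one_smul, smul_zero, mul_one, MulOpposite.op_zero, MulOpposite.op_one]

/-- The comultiplication. -/
noncomputable def kDelta (h : ξ * ξ = -1) : KAlg 𝕜 ξ →ₐ[𝕜] KAlg 𝕜 ξ ⊗[𝕜] KAlg 𝕜 ξ :=
  RingQuot.liftAlgHom 𝕜 ⟨lift 𝕜 kDeltaGen, kDelta_rel h⟩

/-- The counit. -/
noncomputable def kEps : KAlg 𝕜 ξ →ₐ[𝕜] 𝕜 :=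
  RingQuot.liftAlgHom 𝕜 ⟨lift 𝕜 kEpsGen, kEps_rel⟩

/-- The antipode, as an algebra map to the opposite algebra. -/
noncomputable def kSop (h : ξ * ξ = -1) : KAlg 𝕜 ξ →ₐ[𝕜] (KAlg 𝕜 ξ)ᵐᵒᵖ :=
  RingQuot.liftAlgHom 𝕜 ⟨lift 𝕜 kSGen, kS_rel h⟩

/-- The antipode. -/
noncomputable def kS (h : ξ * ξ = -1) : KAlg 𝕜 ξ →ₗ[𝕜] KAlg 𝕜 ξ :=
  (MulOpposite.opLinearEquiv 𝕜).symm.toLinearMap ∘ₗ (kSop h).toLinearMap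

/-- The image of a generator in `K`. -/
noncomputable def kGen (g : KGen) : KAlg 𝕜 ξ := RingQuot.mkAlgHom 𝕜 (KRel 𝕜 ξ) (ι 𝕜 g)

theorem kDelta_gen (h : ξ * ξ = -1) (g : KGen) : kDelta h (kGen g) = kDeltaGen g := by
  simp [kDelta, kGen]

theorem kEps_gen (g : KGen) : kEps (𝕜 := 𝕜) (ξ := ξ) (kGen g) = kEpsGen g := by
  simp [kEps, kGen]

theorem kS_gen (h : ξ * ξ = -1) (g : KGen) : kS h (kGen g) = (kSGen g).unop := by
  simp [kS, kSop, kGen]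

theorem kS_mul (h : ξ * ξ = -1) (x y : KAlg 𝕜 ξ) : kS h (x * y) = kS h y * kS h x := by
  simp [kS]

theorem kS_one (h : ξ * ξ = -1) : kS (𝕜 := 𝕜) h 1 = 1 := by
  simp [kS]

theorem kDelta_A (h : ξ * ξ = -1) : kDelta h (kA 𝕜 ξ) =
    kA 𝕜 ξ ⊗ₜ[𝕜] kA 𝕜 ξ + kB 𝕜 ξ ⊗ₜ[𝕜] kC 𝕜 ξ := kDelta_gen h .a
theorem kDelta_B (h : ξ * ξ = -1) : kDelta h (kB 𝕜 ξ) =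
    kA 𝕜 ξ ⊗ₜ[𝕜] kB 𝕜 ξ + kB 𝕜 ξ ⊗ₜ[𝕜] kD 𝕜 ξ := kDelta_gen h .b
theorem kDelta_C (h : ξ * ξ = -1) : kDelta h (kC 𝕜 ξ) =
    kC 𝕜 ξ ⊗ₜ[𝕜] kA 𝕜 ξ + kD 𝕜 ξ ⊗ₜ[𝕜] kC 𝕜 ξ := kDelta_gen h .c
theorem kDelta_D (h : ξ * ξ = -1) : kDelta h (kD 𝕜 ξ) =
    kC 𝕜 ξ ⊗ₜ[𝕜] kB 𝕜 ξ + kD 𝕜 ξ ⊗ₜ[𝕜] kD 𝕜 ξ := kDelta_gen h .d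
theorem kEps_A : kEps (kA 𝕜 ξ) = 1 := kEps_gen .a
theorem kEps_B : kEps (kB 𝕜 ξ) = 0 := kEps_gen .b
theorem kEps_C : kEps (kC 𝕜 ξ) = 0 := kEps_gen .c
theorem kEps_D : kEps (kD 𝕜 ξ) = 1 := kEps_gen .d
theorem kS_A (h : ξ * ξ = -1) : kS h (kA 𝕜 ξ) = kD 𝕜 ξ := kS_gen h .a
theorem kS_B (h : ξ * ξ = -1) : kS h (kB 𝕜 ξ) = ξ • kB 𝕜 ξ := kS_gen h .b
theorem kS_C (h : ξ * ξ = -1) : kS h (kC 𝕜 ξ) = (-ξ) • kC 𝕜 ξ := kS_gen h .c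
theorem kS_D (h : ξ * ξ = -1) : kS h (kD 𝕜 ξ) = kA 𝕜 ξ := kS_gen h .d

theorem kAlg_induction {P : KAlg 𝕜 ξ → Prop} (hr : ∀ r : 𝕜, P (algebraMap 𝕜 _ r))
    (ha : P (kA 𝕜 ξ)) (hb : P (kB 𝕜 ξ)) (hc : P (kC 𝕜 ξ)) (hd : P (kD 𝕜 ξ))
    (hadd : ∀ x y, P x → P y → P (x + y)) (hmul : ∀ x y, P x → P y → P (x * y))
    (x : KAlg 𝕜 ξ) : P x := by
  obtain ⟨x, rfl⟩ := RingQuot.mkAlgHom_surjective 𝕜 (KRel 𝕜 ξ) x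
  induction x using FreeAlgebra.induction with
  | grade0 r => simpa using hr r
  | grade1 g => cases g <;> assumption
  | mul x y hx hy => rw [map_mul]; exact hmul _ _ hx hy
  | add x y hx hy => rw [map_add]; exact hadd _ _ hx hy

theorem kAlg_hom_ext {B : Type} [Semiring B] [Algebra 𝕜 B] {f g : KAlg 𝕜 ξ →ₐ[𝕜] B}
    (ha : f (kA 𝕜 ξ) = g (kA 𝕜 ξ)) (hb : f (kB 𝕜 ξ) = g (kB 𝕜 ξ))
    (hc : f (kC 𝕜 ξ) = g (kC 𝕜 ξ)) (hd : f (kD 𝕜 ξ) = g (kD 𝕜 ξ)) : f = g := by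
  refine AlgHom.ext fun x => ?_
  induction x using kAlg_induction with
  | hr r => simp
  | ha => exact ha
  | hb => exact hb
  | hc => exact hc
  | hd => exact hd
  | hadd x y hx hy => simp [hx, hy]
  | hmul x y hx hy => simp [hx, hy]

theorem kCoassoc (h : ξ * ξ = -1) :
    (Algebra.TensorProduct.assoc 𝕜 𝕜 𝕜 (KAlg 𝕜 ξ) (KAlg 𝕜 ξ) (KAlg 𝕜 ξ)).toAlgHom.comp
      ((Algebra.TensorProduct.map (kDelta h) (AlgHom.id 𝕜 _)).comp (kDelta h)) =
    (Algebra.TensorProduct.map (AlgHom.id 𝕜 _) (kDelta h)).comp (kDelta h) := by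
  apply kAlg_hom_ext <;>
  simp [kDelta_A, kDelta_B, kDelta_C, kDelta_D, TensorProduct.add_tmul, TensorProduct.tmul_add] <;>
  abel

theorem kCounitL (h : ξ * ξ = -1) :
    (Algebra.TensorProduct.lid 𝕜 (KAlg 𝕜 ξ)).toAlgHom.comp
      ((Algebra.TensorProduct.map kEps (AlgHom.id 𝕜 _)).comp (kDelta h)) = AlgHom.id 𝕜 _ := by
  apply kAlg_hom_ext <;>
  simp [kDelta_A, kDelta_B, kDelta_C, kDelta_D, kEps_A, kEps_B, kEps_C, kEps_D]

theorem kCounitR (h : ξ * ξ = -1) :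
    (Algebra.TensorProduct.rid 𝕜 𝕜 (KAlg 𝕜 ξ)).toAlgHom.comp
      ((Algebra.TensorProduct.map (AlgHom.id 𝕜 _) kEps).comp (kDelta h)) = AlgHom.id 𝕜 _ := by
  apply kAlg_hom_ext <;>
  simp [kDelta_A, kDelta_B, kDelta_C, kDelta_D, kEps_A, kEps_B, kEps_C, kEps_D]

theorem kAntiL_mul (h : ξ * ξ = -1) (T U : KAlg 𝕜 ξ ⊗[𝕜] KAlg 𝕜 ξ) (r : 𝕜)
    (hT : LinearMap.mul' 𝕜 (KAlg 𝕜 ξ) (TensorProduct.map (kS h) LinearMap.id T) =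
      algebraMap 𝕜 _ r) :
    LinearMap.mul' 𝕜 (KAlg 𝕜 ξ) (TensorProduct.map (kS h) LinearMap.id (T * U)) =
      r • LinearMap.mul' 𝕜 (KAlg 𝕜 ξ) (TensorProduct.map (kS h) LinearMap.id U) := by
  induction U using TensorProduct.induction_on with
  | zero => simp
  | add U V hU hV => simp only [mul_add, map_add, hU, hV, smul_add]
  | tmul x y =>
    have key : LinearMap.mul' 𝕜 (KAlg 𝕜 ξ)
        (TensorProduct.map (kS h) LinearMap.id (T * x ⊗ₜ[𝕜] y)) =
        kS h x * LinearMap.mul' 𝕜 (KAlg 𝕜 ξ) (TensorProduct.map (kS h) LinearMap.id T) * y := by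
      clear hT
      induction T using TensorProduct.induction_on with
      | zero => simp
      | add U V hU hV => simp only [add_mul, mul_add, map_add, hU, hV]
      | tmul z w => simp [kS_mul, mul_assoc]
    rw [key, hT, ← Algebra.commutes, mul_assoc, ← Algebra.smul_def]
    simp

theorem kAntiR_mul (h : ξ * ξ = -1) (T U : KAlg 𝕜 ξ ⊗[𝕜] KAlg 𝕜 ξ) (r : 𝕜)
    (hU : LinearMap.mul' 𝕜 (KAlg 𝕜 ξ) (TensorProduct.map LinearMap.id (kS h) U) =
      algebraMap 𝕜 _ r) :
    LinearMap.mul' 𝕜 (KAlg 𝕜 ξ) (TensorProduct.map LinearMap.id (kS h) (T * U)) =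
      r • LinearMap.mul' 𝕜 (KAlg 𝕜 ξ) (TensorProduct.map LinearMap.id (kS h) T) := by
  induction T using TensorProduct.induction_on with
  | zero => simp
  | add U V hU hV => simp only [add_mul, map_add, hU, hV, smul_add]
  | tmul x y =>
    have key : LinearMap.mul' 𝕜 (KAlg 𝕜 ξ)
        (TensorProduct.map LinearMap.id (kS h) (x ⊗ₜ[𝕜] y * U)) =
        x * LinearMap.mul' 𝕜 (KAlg 𝕜 ξ) (TensorProduct.map LinearMap.id (kS h) U) * kS h y := by
      clear hU
      induction U using TensorProduct.induction_on with
      | zero => simp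
      | add U V hU hV => simp only [add_mul, mul_add, map_add, hU, hV]
      | tmul z w => simp [kS_mul, mul_assoc]
    rw [key, hU, ← Algebra.commutes, mul_assoc, ← Algebra.smul_def]
    simp

theorem kAntiL (h : ξ * ξ = -1) (x : KAlg 𝕜 ξ) :
    LinearMap.mul' 𝕜 (KAlg 𝕜 ξ) (TensorProduct.map (kS h) LinearMap.id (kDelta h x)) =
      algebraMap 𝕜 _ (kEps x) := by
  induction x using kAlg_induction with
  | hr r => simp [Algebra.TensorProduct.algebraMap_apply, Algebra.algebraMap_eq_smul_one, kS_one,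
      Algebra.TensorProduct.one_def]
  | hadd x y hx hy => simp only [map_add, hx, hy]
  | hmul x y hx hy => rw [map_mul, kAntiL_mul h _ _ _ hx, hy, map_mul, map_mul, Algebra.smul_def]
  | _ =>
    simp [kDelta_A, kDelta_B, kDelta_C, kDelta_D, kEps_A, kEps_B, kEps_C, kEps_D,
      kS_A, kS_B, kS_C, kS_D]
    simp [kB_eq, kD_eq, mul_assoc, kC_mul_kA h, kC_mul_kA' h, kC_mul_kC, kC_mul_kC', kA_four,
      kA_four', smul_smul, -neg_smul, h, mul_self_cancel h]
    try module

theorem kAntiR (h : ξ * ξ = -1) (x : KAlg 𝕜 ξ) :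
    LinearMap.mul' 𝕜 (KAlg 𝕜 ξ) (TensorProduct.map LinearMap.id (kS h) (kDelta h x)) =
      algebraMap 𝕜 _ (kEps x) := by
  induction x using kAlg_induction with
  | hr r => simp [Algebra.TensorProduct.algebraMap_apply, Algebra.algebraMap_eq_smul_one, kS_one,
      Algebra.TensorProduct.one_def]
  | hadd x y hx hy => simp only [map_add, hx, hy]
  | hmul x y hx hy =>
    rw [map_mul, kAntiR_mul h _ _ _ hy, hx, map_mul, map_mul, Algebra.smul_def, Algebra.commutes]
  | _ =>
    simp [kDelta_A, kDelta_B, kDelta_C, kDelta_D, kEps_A, kEps_B, kEps_C, kEps_D,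
      kS_A, kS_B, kS_C, kS_D]
    simp [kB_eq, kD_eq, mul_assoc, kC_mul_kA h, kC_mul_kA' h, kC_mul_kC, kC_mul_kC', kA_four,
      kA_four', smul_smul, -neg_smul, h, mul_self_cancel h]
    try module

end KHelpers

/-- There exists a Hopf algebra structure on `K` over `𝕜` (comultiplication
`Δ` and counit `ε` are algebra maps, `Δ` is coassociative with counit `ε`, and `S` is an
antipode) whose structure maps satisfy `Δ(a) = a⊗a + b⊗c`, `Δ(b) = a⊗b + b⊗d`,
`Δ(c) = c⊗a + d⊗c`, `Δ(d) = c⊗b + d⊗d`, `ε(a) = ε(d) = 1`, `ε(b) = ε(c) = 0`,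
`S(a) = d`, `S(b) = ξb`, `S(c) = -ξc`, `S(d) = a`. -/
theorem stmt_1 (𝕜 : Type) [Field 𝕜] [IsAlgClosed 𝕜] [CharZero 𝕜]
    (ξ : 𝕜) (hξ : IsPrimitiveRoot ξ 4) :
    ∃ (Δ : KAlg 𝕜 ξ →ₐ[𝕜] KAlg 𝕜 ξ ⊗[𝕜] KAlg 𝕜 ξ) (ε : KAlg 𝕜 ξ →ₐ[𝕜] 𝕜)
      (S : KAlg 𝕜 ξ →ₗ[𝕜] KAlg 𝕜 ξ),
      -- coassociativity
      (TensorProduct.assoc 𝕜 (KAlg 𝕜 ξ) (KAlg 𝕜 ξ) (KAlg 𝕜 ξ)).toLinearMap ∘ₗ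
          TensorProduct.map Δ.toLinearMap LinearMap.id ∘ₗ Δ.toLinearMap =
        TensorProduct.map LinearMap.id Δ.toLinearMap ∘ₗ Δ.toLinearMap ∧
      -- counit axioms
      (TensorProduct.lid 𝕜 (KAlg 𝕜 ξ)).toLinearMap ∘ₗ
          TensorProduct.map ε.toLinearMap LinearMap.id ∘ₗ Δ.toLinearMap = LinearMap.id ∧
      (TensorProduct.rid 𝕜 (KAlg 𝕜 ξ)).toLinearMap ∘ₗ
          TensorProduct.map LinearMap.id ε.toLinearMap ∘ₗ Δ.toLinearMap = LinearMap.id ∧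
      -- antipode axioms
      LinearMap.mul' 𝕜 (KAlg 𝕜 ξ) ∘ₗ TensorProduct.map S LinearMap.id ∘ₗ Δ.toLinearMap =
        Algebra.linearMap 𝕜 (KAlg 𝕜 ξ) ∘ₗ ε.toLinearMap ∧
      LinearMap.mul' 𝕜 (KAlg 𝕜 ξ) ∘ₗ TensorProduct.map LinearMap.id S ∘ₗ Δ.toLinearMap =
        Algebra.linearMap 𝕜 (KAlg 𝕜 ξ) ∘ₗ ε.toLinearMap ∧
      -- values on the generators
      KComulOn 𝕜 ξ Δ ∧ KCounitOn 𝕜 ξ ε ∧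
      S (kA 𝕜 ξ) = kD 𝕜 ξ ∧ S (kB 𝕜 ξ) = ξ • kB 𝕜 ξ ∧
      S (kC 𝕜 ξ) = -(ξ • kC 𝕜 ξ) ∧ S (kD 𝕜 ξ) = kA 𝕜 ξ := by
  have h : ξ * ξ = -1 := by
    have h4 : ξ ^ 4 = 1 := hξ.pow_eq_one
    have h2 : ξ ^ 2 ≠ 1 := hξ.pow_ne_one_of_pos_of_lt (by norm_num) (by norm_num)
    have h0 : (ξ ^ 2 - 1) * (ξ * ξ + 1) = 0 := by linear_combination h4
    rcases mul_eq_zero.mp h0 with h1 | h1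
    · exact absurd (sub_eq_zero.mp h1) h2
    · exact eq_neg_of_add_eq_zero_left h1
  refine ⟨kDelta h, kEps, kS h, ?_, ?_, ?_, ?_, ?_,
    ⟨kDelta_A h, kDelta_B h, kDelta_C h, kDelta_D h⟩, ⟨kEps_A, kEps_B, kEps_C, kEps_D⟩,
    kS_A h, kS_B h, (kS_C h).trans (neg_smul ξ (kC 𝕜 ξ)), kS_D h⟩
  · exact congrArg AlgHom.toLinearMap (kCoassoc h)
  · exact congrArg AlgHom.toLinearMap (kCounitL h)
  · exact congrArg AlgHom.toLinearMap (kCounitR h)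
  · exact LinearMap.ext (kAntiL h)
  · exact LinearMap.ext (kAntiR h)
end

section
/- Every algebra homomorphism D → k is equal to χʲ for a unique j ∈ Z/4, and conversely each χʲ is a well-defined algebra homomorphism D → k; hence D has exactly four 1-dimensional left modules up to isomorphism, namely k_{χ⁰}, k_{χ¹}, k_{χ²}, k_{χ³}. -/
open scoped TensorProduct

/-- Generators of the Drinfeld double `D = D(K^cop)`. -/
inductive DGen : Type
  | a | b | c | d | x | g

open FreeAlgebra in
/-- The defining relations of the algebra `D = D(K^cop)`. -/
inductive DRel (𝕜 : Type) [Field 𝕜] (ξ ν : 𝕜) :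
    FreeAlgebra 𝕜 DGen → FreeAlgebra 𝕜 DGen → Prop
  | ab : DRel 𝕜 ξ ν (ι 𝕜 DGen.a * ι 𝕜 DGen.b) (ξ • (ι 𝕜 DGen.b * ι 𝕜 DGen.a))
  | ac : DRel 𝕜 ξ ν (ι 𝕜 DGen.a * ι 𝕜 DGen.c) (ξ • (ι 𝕜 DGen.c * ι 𝕜 DGen.a))
  | cb : DRel 𝕜 ξ ν (ι 𝕜 DGen.c * ι 𝕜 DGen.b) 0
  | bc : DRel 𝕜 ξ ν (ι 𝕜 DGen.b * ι 𝕜 DGen.c) 0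
  | cd : DRel 𝕜 ξ ν (ι 𝕜 DGen.c * ι 𝕜 DGen.d) (ξ • (ι 𝕜 DGen.d * ι 𝕜 DGen.c))
  | bd : DRel 𝕜 ξ ν (ι 𝕜 DGen.b * ι 𝕜 DGen.d) (ξ • (ι 𝕜 DGen.d * ι 𝕜 DGen.b))
  | adcomm : DRel 𝕜 ξ ν (ι 𝕜 DGen.a * ι 𝕜 DGen.d) (ι 𝕜 DGen.d * ι 𝕜 DGen.a)
  | adone : DRel 𝕜 ξ ν (ι 𝕜 DGen.a * ι 𝕜 DGen.d) 1
  | bsq : DRel 𝕜 ξ ν (ι 𝕜 DGen.b * ι 𝕜 DGen.b) 0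
  | csq : DRel 𝕜 ξ ν (ι 𝕜 DGen.c * ι 𝕜 DGen.c) 0
  | aac : DRel 𝕜 ξ ν (ι 𝕜 DGen.a * ι 𝕜 DGen.a * ι 𝕜 DGen.c) (ι 𝕜 DGen.b)
  | afour : DRel 𝕜 ξ ν (ι 𝕜 DGen.a ^ 4) 1
  | gfour : DRel 𝕜 ξ ν (ι 𝕜 DGen.g ^ 4) 1
  | xsq : DRel 𝕜 ξ ν (ι 𝕜 DGen.x * ι 𝕜 DGen.x) (ι 𝕜 DGen.g * ι 𝕜 DGen.g - 1)
  | gx : DRel 𝕜 ξ ν (ι 𝕜 DGen.g * ι 𝕜 DGen.x) (-(ι 𝕜 DGen.x * ι 𝕜 DGen.g))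
  | ag : DRel 𝕜 ξ ν (ι 𝕜 DGen.a * ι 𝕜 DGen.g) (ι 𝕜 DGen.g * ι 𝕜 DGen.a)
  | bg : DRel 𝕜 ξ ν (ι 𝕜 DGen.b * ι 𝕜 DGen.g) (-(ι 𝕜 DGen.g * ι 𝕜 DGen.b))
  | cg : DRel 𝕜 ξ ν (ι 𝕜 DGen.c * ι 𝕜 DGen.g) (-(ι 𝕜 DGen.g * ι 𝕜 DGen.c))
  | dg : DRel 𝕜 ξ ν (ι 𝕜 DGen.d * ι 𝕜 DGen.g) (ι 𝕜 DGen.g * ι 𝕜 DGen.d)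
  | axr : DRel 𝕜 ξ ν (ι 𝕜 DGen.a * ι 𝕜 DGen.x)
      ((ν * ξ) • (ι 𝕜 DGen.b + ι 𝕜 DGen.g * ι 𝕜 DGen.c) - ξ • (ι 𝕜 DGen.x * ι 𝕜 DGen.a))
  | bxr : DRel 𝕜 ξ ν (ι 𝕜 DGen.b * ι 𝕜 DGen.x)
      ((ν * ξ) • (ι 𝕜 DGen.a - ι 𝕜 DGen.g * ι 𝕜 DGen.d) + ξ • (ι 𝕜 DGen.x * ι 𝕜 DGen.b))
  | cxr : DRel 𝕜 ξ ν (ι 𝕜 DGen.c * ι 𝕜 DGen.x)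
      ((ν * ξ) • (ι 𝕜 DGen.d - ι 𝕜 DGen.g * ι 𝕜 DGen.a) - ξ • (ι 𝕜 DGen.x * ι 𝕜 DGen.c))
  | dxr : DRel 𝕜 ξ ν (ι 𝕜 DGen.d * ι 𝕜 DGen.x)
      ((ν * ξ) • (ι 𝕜 DGen.c + ι 𝕜 DGen.g * ι 𝕜 DGen.b) + ξ • (ι 𝕜 DGen.x * ι 𝕜 DGen.d))

/-- The Drinfeld double `D = D(K^cop)`, presented by generators and relations. -/
abbrev DAlg (𝕜 : Type) [Field 𝕜] (ξ ν : 𝕜) : Type := RingQuot (DRel 𝕜 ξ ν)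

variable (𝕜 : Type) [Field 𝕜] (ξ ν : 𝕜)

/-- The generator `a` of `D`. -/
noncomputable def gA : DAlg 𝕜 ξ ν := RingQuot.mkAlgHom 𝕜 (DRel 𝕜 ξ ν) (FreeAlgebra.ι 𝕜 DGen.a)
/-- The generator `b` of `D`. -/
noncomputable def gB : DAlg 𝕜 ξ ν := RingQuot.mkAlgHom 𝕜 (DRel 𝕜 ξ ν) (FreeAlgebra.ι 𝕜 DGen.b)
/-- The generator `c` of `D`. -/
noncomputable def gC : DAlg 𝕜 ξ ν := RingQuot.mkAlgHom 𝕜 (DRel 𝕜 ξ ν) (FreeAlgebra.ι 𝕜 DGen.c)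
/-- The generator `d` of `D`. -/
noncomputable def gD : DAlg 𝕜 ξ ν := RingQuot.mkAlgHom 𝕜 (DRel 𝕜 ξ ν) (FreeAlgebra.ι 𝕜 DGen.d)
/-- The generator `x` of `D`. -/
noncomputable def gX : DAlg 𝕜 ξ ν := RingQuot.mkAlgHom 𝕜 (DRel 𝕜 ξ ν) (FreeAlgebra.ι 𝕜 DGen.x)
/-- The generator `g` of `D`. -/
noncomputable def gG : DAlg 𝕜 ξ ν := RingQuot.mkAlgHom 𝕜 (DRel 𝕜 ξ ν) (FreeAlgebra.ι 𝕜 DGen.g)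

variable {𝕜 ξ ν}
variable {V W : Type} [AddCommGroup V] [Module 𝕜 V] [AddCommGroup W] [Module 𝕜 W]

/-- A `𝕜`-subspace is invariant under a representation of `D`. -/
def DInvariant (ρ : DAlg 𝕜 ξ ν →ₐ[𝕜] Module.End 𝕜 V) (U : Submodule 𝕜 V) : Prop :=
  ∀ z : DAlg 𝕜 ξ ν, ∀ w ∈ U, ρ z w ∈ U

/-- A representation of `D` is simple (the corresponding `D`-module is simple). -/
def DSimpleRep (ρ : DAlg 𝕜 ξ ν →ₐ[𝕜] Module.End 𝕜 V) : Prop :=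
  Nontrivial V ∧ ∀ U : Submodule 𝕜 V, DInvariant ρ U → U = ⊥ ∨ U = ⊤

/-- A representation of `D` is indecomposable. -/
def DIndecRep (ρ : DAlg 𝕜 ξ ν →ₐ[𝕜] Module.End 𝕜 V) : Prop :=
  Nontrivial V ∧ ∀ U₁ U₂ : Submodule 𝕜 V, DInvariant ρ U₁ → DInvariant ρ U₂ →
    IsCompl U₁ U₂ → U₁ = ⊥ ∨ U₂ = ⊥

/-- The vector `v` spans a copy of the character `χ^j` inside a representation of `D`:
the generators act on `v` by the scalars `χ^j(a) = ξ^j`, `χ^j(b) = χ^j(c) = χ^j(x) = 0`,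
`χ^j(d) = ξ^{-j}`, `χ^j(g) = (-1)^j`. -/
def ChiOn (ρ : DAlg 𝕜 ξ ν →ₐ[𝕜] Module.End 𝕜 V) (j : ZMod 4) (v : V) : Prop :=
  ρ (gA 𝕜 ξ ν) v = ξ ^ j.val • v ∧ ρ (gB 𝕜 ξ ν) v = 0 ∧ ρ (gC 𝕜 ξ ν) v = 0 ∧
  ρ (gD 𝕜 ξ ν) v = (ξ ^ j.val)⁻¹ • v ∧ ρ (gX 𝕜 ξ ν) v = 0 ∧
  ρ (gG 𝕜 ξ ν) v = (-1 : 𝕜) ^ j.val • v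

/-- The pair `(e₁, e₂)` realizes the defining action of the module `V_{i,j}`. -/
def VijOn (ρ : DAlg 𝕜 ξ ν →ₐ[𝕜] Module.End 𝕜 V) (i j : ZMod 4) (e₁ e₂ : V) : Prop :=
  ρ (gA 𝕜 ξ ν) e₁ = ξ ^ i.val • e₁ ∧ ρ (gA 𝕜 ξ ν) e₂ = ξ ^ (i.val + 3) • e₂ ∧
  ρ (gB 𝕜 ξ ν) e₁ = 0 ∧ ρ (gB 𝕜 ξ ν) e₂ = (-1 : 𝕜) ^ i.val • e₁ ∧
  ρ (gC 𝕜 ξ ν) e₁ = 0 ∧ ρ (gC 𝕜 ξ ν) e₂ = e₁ ∧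
  ρ (gD 𝕜 ξ ν) e₁ = (ξ ^ i.val)⁻¹ • e₁ ∧ ρ (gD 𝕜 ξ ν) e₂ = (ξ * (ξ ^ i.val)⁻¹) • e₂ ∧
  ρ (gG 𝕜 ξ ν) e₁ = ξ ^ j.val • e₁ ∧ ρ (gG 𝕜 ξ ν) e₂ = ξ ^ (j.val + 2) • e₂ ∧
  ρ (gX 𝕜 ξ ν) e₁ = (ν * ξ * (ξ ^ (3 * i.val) - ξ ^ (i.val + j.val))) • e₂ ∧
  ρ (gX 𝕜 ξ ν) e₂ = (ν * ξ / 2 * (ξ ^ i.val + ξ ^ (3 * i.val + j.val))) • e₁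

/-- The tuple `p` realizes the defining action of the module `P(ℓ) = P ⊗ k_{χ^ℓ}`
(`P = P(0)` being the projective cover of the trivial module). -/
def POn (ρ : DAlg 𝕜 ξ ν →ₐ[𝕜] Module.End 𝕜 V) (ℓ : ZMod 4) (p : Fin 4 → V) : Prop :=
  ρ (gA 𝕜 ξ ν) (p 0) = ξ ^ ℓ.val • p 0 ∧ ρ (gA 𝕜 ξ ν) (p 1) = -(ξ ^ (ℓ.val + 1)) • p 1 ∧
  ρ (gA 𝕜 ξ ν) (p 2) = ξ ^ (ℓ.val + 1) • p 2 ∧ ρ (gA 𝕜 ξ ν) (p 3) = ξ ^ ℓ.val • p 3 ∧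
  ρ (gB 𝕜 ξ ν) (p 0) = ξ ^ ℓ.val • p 2 ∧ ρ (gB 𝕜 ξ ν) (p 1) = ξ ^ (ℓ.val + 1) • p 3 ∧
  ρ (gB 𝕜 ξ ν) (p 2) = 0 ∧ ρ (gB 𝕜 ξ ν) (p 3) = 0 ∧
  ρ (gC 𝕜 ξ ν) (p 0) = -((ξ ^ ℓ.val)⁻¹) • p 2 ∧
  ρ (gC 𝕜 ξ ν) (p 1) = (ξ * (ξ ^ ℓ.val)⁻¹) • p 3 ∧
  ρ (gC 𝕜 ξ ν) (p 2) = 0 ∧ ρ (gC 𝕜 ξ ν) (p 3) = 0 ∧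
  ρ (gD 𝕜 ξ ν) (p 0) = (ξ ^ ℓ.val)⁻¹ • p 0 ∧
  ρ (gD 𝕜 ξ ν) (p 1) = (ξ * (ξ ^ ℓ.val)⁻¹) • p 1 ∧
  ρ (gD 𝕜 ξ ν) (p 2) = -(ξ * (ξ ^ ℓ.val)⁻¹) • p 2 ∧
  ρ (gD 𝕜 ξ ν) (p 3) = (ξ ^ ℓ.val)⁻¹ • p 3 ∧
  ρ (gX 𝕜 ξ ν) (p 0) = p 1 + ν • p 2 ∧ ρ (gX 𝕜 ξ ν) (p 1) = -(ν • p 3) ∧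
  ρ (gX 𝕜 ξ ν) (p 2) = p 3 ∧ ρ (gX 𝕜 ξ ν) (p 3) = 0 ∧
  ρ (gG 𝕜 ξ ν) (p 0) = (-1 : 𝕜) ^ ℓ.val • p 0 ∧
  ρ (gG 𝕜 ξ ν) (p 1) = -((-1 : 𝕜) ^ ℓ.val) • p 1 ∧
  ρ (gG 𝕜 ξ ν) (p 2) = -((-1 : 𝕜) ^ ℓ.val) • p 2 ∧
  ρ (gG 𝕜 ξ ν) (p 3) = (-1 : 𝕜) ^ ℓ.val • p 3

/-- `ρT` is the tensor product representation of `ρM` and `ρN` on `M ⊗ N`, where the action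
of `D` on a tensor product is given through the coproduct of the Drinfeld double:
`a ↦ a⊗a + c⊗b`, `b ↦ b⊗a + d⊗b`, `c ↦ a⊗c + c⊗d`, `d ↦ b⊗c + d⊗d`, `g ↦ g⊗g`,
`x ↦ x⊗1 + g⊗x`. -/
def TensorRepOn (ρM : DAlg 𝕜 ξ ν →ₐ[𝕜] Module.End 𝕜 V) (ρN : DAlg 𝕜 ξ ν →ₐ[𝕜] Module.End 𝕜 W)
    (ρT : DAlg 𝕜 ξ ν →ₐ[𝕜] Module.End 𝕜 (V ⊗[𝕜] W)) : Prop :=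
  ρT (gA 𝕜 ξ ν) = TensorProduct.map (ρM (gA 𝕜 ξ ν)) (ρN (gA 𝕜 ξ ν)) +
      TensorProduct.map (ρM (gC 𝕜 ξ ν)) (ρN (gB 𝕜 ξ ν)) ∧
  ρT (gB 𝕜 ξ ν) = TensorProduct.map (ρM (gB 𝕜 ξ ν)) (ρN (gA 𝕜 ξ ν)) +
      TensorProduct.map (ρM (gD 𝕜 ξ ν)) (ρN (gB 𝕜 ξ ν)) ∧
  ρT (gC 𝕜 ξ ν) = TensorProduct.map (ρM (gA 𝕜 ξ ν)) (ρN (gC 𝕜 ξ ν)) +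
      TensorProduct.map (ρM (gC 𝕜 ξ ν)) (ρN (gD 𝕜 ξ ν)) ∧
  ρT (gD 𝕜 ξ ν) = TensorProduct.map (ρM (gB 𝕜 ξ ν)) (ρN (gC 𝕜 ξ ν)) +
      TensorProduct.map (ρM (gD 𝕜 ξ ν)) (ρN (gD 𝕜 ξ ν)) ∧
  ρT (gG 𝕜 ξ ν) = TensorProduct.map (ρM (gG 𝕜 ξ ν)) (ρN (gG 𝕜 ξ ν)) ∧
  ρT (gX 𝕜 ξ ν) = TensorProduct.map (ρM (gX 𝕜 ξ ν)) LinearMap.id +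
      TensorProduct.map (ρM (gG 𝕜 ξ ν)) (ρN (gX 𝕜 ξ ν))

/-- `f` is the character `χ^j` of `D`: `χ^j(a) = ξ^j`, `χ^j(b) = χ^j(c) = χ^j(x) = 0`,
`χ^j(d) = ξ^{-j}`, `χ^j(g) = (-1)^j`. -/
def IsChi (𝕜 : Type) [Field 𝕜] (ξ ν : 𝕜) (f : DAlg 𝕜 ξ ν →ₐ[𝕜] 𝕜) (j : ZMod 4) : Prop :=
  f (gA 𝕜 ξ ν) = ξ ^ j.val ∧ f (gB 𝕜 ξ ν) = 0 ∧ f (gC 𝕜 ξ ν) = 0 ∧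
  f (gD 𝕜 ξ ν) = (ξ ^ j.val)⁻¹ ∧ f (gX 𝕜 ξ ν) = 0 ∧ f (gG 𝕜 ξ ν) = (-1 : 𝕜) ^ j.val

/-- The values of `χ^j` on the generators. -/
noncomputable def chiGen (𝕜 : Type) [Field 𝕜] (ξ : 𝕜) (j : ℕ) : DGen → 𝕜
  | .a => ξ ^ j
  | .b => 0
  | .c => 0
  | .d => (ξ ^ j)⁻¹
  | .x => 0
  | .g => (-1) ^ j

theorem xi_sq (𝕜 : Type) [Field 𝕜] (ξ : 𝕜) (hξ : IsPrimitiveRoot ξ 4) : ξ ^ 2 = -1 :=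
  (hξ.pow (by norm_num) (show 4 = 2 * 2 by norm_num)).eq_neg_one_of_two_right

theorem chi_rel (𝕜 : Type) [Field 𝕜] (ξ ν : 𝕜) (hξ : IsPrimitiveRoot ξ 4) (j : ℕ)
    {p q : FreeAlgebra 𝕜 DGen} (h : DRel 𝕜 ξ ν p q) :
    FreeAlgebra.lift 𝕜 (chiGen 𝕜 ξ j) p = FreeAlgebra.lift 𝕜 (chiGen 𝕜 ξ j) q := by
  have h0 : ξ ^ j ≠ 0 := pow_ne_zero _ (hξ.ne_zero (by norm_num))
  have h2 : (-1 : 𝕜) ^ j = ξ ^ j * ξ ^ j := by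
    rw [← xi_sq 𝕜 ξ hξ, ← pow_mul, ← pow_add, two_mul]
  have h4 : (ξ ^ j) ^ 4 = 1 := by rw [← pow_mul, mul_comm, pow_mul, hξ.pow_eq_one, one_pow]
  have hg : ((-1 : 𝕜) ^ j) * (-1) ^ j = 1 := by rw [← mul_pow]; simp
  have hg4 : ((-1 : 𝕜) ^ j) ^ 4 = 1 := by linear_combination (((-1 : 𝕜) ^ j) * (-1) ^ j + 1) * hg
  have h1 : ξ ^ j = (-1) ^ j * (ξ ^ j)⁻¹ := by rw [h2]; field_simp
  have h3 : (ξ ^ j)⁻¹ = (-1) ^ j * ξ ^ j := by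
    rw [h2]; field_simp; linear_combination -h4
  cases h <;> simp only [map_mul, map_add, map_sub, map_neg, map_smul, map_pow, map_one, map_zero,
    FreeAlgebra.lift_ι_apply, chiGen, smul_eq_mul, mul_zero, zero_mul, neg_zero, add_zero,
    sub_zero, hg, hg4, h4, sub_self, mul_inv_cancel₀ h0]
  case adcomm => rw [inv_mul_cancel₀ h0]
  case ag => ring
  case dg => ring
  case bxr => rw [← h1, sub_self, mul_zero]
  case cxr => rw [← h3, sub_self, mul_zero]

theorem chi_exists (𝕜 : Type) [Field 𝕜] (ξ ν : 𝕜) (hξ : IsPrimitiveRoot ξ 4) (j : ZMod 4) :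
    ∃ f : DAlg 𝕜 ξ ν →ₐ[𝕜] 𝕜, IsChi 𝕜 ξ ν f j := by
  refine ⟨RingQuot.liftAlgHom 𝕜 ⟨FreeAlgebra.lift 𝕜 (chiGen 𝕜 ξ j.val),
    fun _ _ h => chi_rel 𝕜 ξ ν hξ j.val h⟩, ?_⟩
  simp [IsChi, gA, gB, gC, gD, gX, gG, chiGen]

theorem chi_inj (𝕜 : Type) [Field 𝕜] (ξ : 𝕜) (hξ : IsPrimitiveRoot ξ 4) {i j : ZMod 4}
    (h : ξ ^ i.val = ξ ^ j.val) : i = j :=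
  ZMod.val_injective 4 (hξ.pow_inj (ZMod.val_lt i) (ZMod.val_lt j) h)

theorem chi_unique (𝕜 : Type) [Field 𝕜] [CharZero 𝕜] (ξ ν : 𝕜) (hξ : IsPrimitiveRoot ξ 4)
    (hν : ν ^ 2 = 2) (f : DAlg 𝕜 ξ ν →ₐ[𝕜] 𝕜) : ∃! j : ZMod 4, IsChi 𝕜 ξ ν f j := by
  have key : ∀ {p q : FreeAlgebra 𝕜 DGen}, DRel 𝕜 ξ ν p q →
      f (RingQuot.mkAlgHom 𝕜 (DRel 𝕜 ξ ν) p) = f (RingQuot.mkAlgHom 𝕜 (DRel 𝕜 ξ ν) q) :=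
    fun h => by rw [RingQuot.mkAlgHom_rel 𝕜 h]
  have hb := key .bsq
  have hc := key .csq
  have had := key .adone
  have ha4 := key .afour
  have hg4 := key .gfour
  have hgx := key .gx
  have hbx := key .bxr
  simp only [map_mul, map_add, map_sub, map_neg, map_smul, map_pow, map_one, map_zero,
    smul_eq_mul] at hb hc had ha4 hg4 hgx hbx
  change f (gB 𝕜 ξ ν) * f (gB 𝕜 ξ ν) = 0 at hb
  change f (gC 𝕜 ξ ν) * f (gC 𝕜 ξ ν) = 0 at hc
  change f (gA 𝕜 ξ ν) * f (gD 𝕜 ξ ν) = 1 at had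
  change f (gA 𝕜 ξ ν) ^ 4 = 1 at ha4
  change f (gG 𝕜 ξ ν) ^ 4 = 1 at hg4
  change f (gG 𝕜 ξ ν) * f (gX 𝕜 ξ ν) = -(f (gX 𝕜 ξ ν) * f (gG 𝕜 ξ ν)) at hgx
  change f (gB 𝕜 ξ ν) * f (gX 𝕜 ξ ν) = ν * ξ * (f (gA 𝕜 ξ ν) - f (gG 𝕜 ξ ν) * f (gD 𝕜 ξ ν)) +
    ξ * (f (gX 𝕜 ξ ν) * f (gB 𝕜 ξ ν)) at hbx
  have hξ0 : ξ ≠ 0 := hξ.ne_zero (by norm_num)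
  have hν0 : ν ≠ 0 := by rintro rfl; norm_num at hν
  have hb0 : f (gB 𝕜 ξ ν) = 0 := mul_self_eq_zero.mp hb
  have hc0 : f (gC 𝕜 ξ ν) = 0 := mul_self_eq_zero.mp hc
  have hg0 : f (gG 𝕜 ξ ν) ≠ 0 := by intro h; rw [h] at hg4; norm_num at hg4
  have hx0 : f (gX 𝕜 ξ ν) = 0 := by
    have h : 2 * f (gG 𝕜 ξ ν) * f (gX 𝕜 ξ ν) = 0 := by linear_combination hgx
    simpa [hg0] using h
  have hag : f (gA 𝕜 ξ ν) - f (gG 𝕜 ξ ν) * f (gD 𝕜 ξ ν) = 0 := by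
    rw [hb0] at hbx
    have h : ν * ξ * (f (gA 𝕜 ξ ν) - f (gG 𝕜 ξ ν) * f (gD 𝕜 ξ ν)) = 0 := by
      linear_combination -hbx
    simpa [hν0, hξ0] using h
  have hg2 : f (gG 𝕜 ξ ν) = f (gA 𝕜 ξ ν) ^ 2 := by
    linear_combination -f (gA 𝕜 ξ ν) * hag - f (gG 𝕜 ξ ν) * had
  obtain ⟨i, hi, hia⟩ := hξ.eq_pow_of_pow_eq_one ha4
  have hv : (i : ZMod 4).val = i := ZMod.val_cast_of_lt hi
  refine ⟨(i : ZMod 4), ?_, ?_⟩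
  · refine ⟨by rw [hv, hia], hb0, hc0, ?_, hx0, ?_⟩
    · rw [hv, hia]; exact eq_inv_of_mul_eq_one_right had
    · rw [hv, hg2, ← hia, ← xi_sq 𝕜 ξ hξ, ← pow_mul, ← pow_mul, mul_comm]
  · intro j hj
    apply chi_inj 𝕜 ξ hξ
    rw [hv, hia, hj.1]

theorem chi_module (𝕜 : Type) [Field 𝕜] [CharZero 𝕜] (ξ ν : 𝕜) (hξ : IsPrimitiveRoot ξ 4)
    (hν : ν ^ 2 = 2) (V : Type) [AddCommGroup V] [Module 𝕜 V] (hV : Module.finrank 𝕜 V = 1)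
    (ρ : DAlg 𝕜 ξ ν →ₐ[𝕜] Module.End 𝕜 V) : ∃! j : ZMod 4, ∀ v : V, ChiOn ρ j v := by
  obtain ⟨e, he, hspan⟩ := finrank_eq_one_iff'.mp hV
  have : Nontrivial V := ⟨e, 0, he⟩
  have hbij : Function.Bijective (Algebra.ofId 𝕜 (Module.End 𝕜 V)) := by
    refine ⟨(algebraMap 𝕜 (Module.End 𝕜 V)).injective, fun T => ?_⟩
    obtain ⟨t, ht⟩ := hspan (T e)
    refine ⟨t, LinearMap.ext fun w => ?_⟩
    obtain ⟨s, rfl⟩ := hspan w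
    rw [map_smul, map_smul, ← ht]
    rfl
  let E : 𝕜 ≃ₐ[𝕜] Module.End 𝕜 V := AlgEquiv.ofBijective _ hbij
  let f : DAlg 𝕜 ξ ν →ₐ[𝕜] 𝕜 := E.symm.toAlgHom.comp ρ
  have hf : ∀ z v, ρ z v = f z • v := by
    intro z v
    have h : E (f z) = ρ z := E.apply_symm_apply (ρ z)
    rw [← h]
    rfl
  obtain ⟨j, ⟨ha, hb, hc, hd, hx, hg⟩, -⟩ := chi_unique 𝕜 ξ ν hξ hν f
  refine ⟨j, fun v => ?_, fun i hi => ?_⟩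
  · simp only [ChiOn, hf, ha, hb, hc, hd, hx, hg, zero_smul, and_self]
  · have h := (hi e).1
    rw [hf, ha] at h
    exact chi_inj 𝕜 ξ hξ (smul_left_injective 𝕜 he h).symm

/-- Every algebra homomorphism `D → 𝕜` equals `χ^j` for a unique
`j ∈ ℤ/4`, and each `χ^j` is a well-defined algebra homomorphism `D → 𝕜`; hence `D` has
exactly four `1`-dimensional left modules up to isomorphism, namely the `𝕜_{χ^j}`. -/
theorem stmt_5 (𝕜 : Type) [Field 𝕜] [IsAlgClosed 𝕜] [CharZero 𝕜]
    (ξ ν : 𝕜) (hξ : IsPrimitiveRoot ξ 4) (hν : ν ^ 2 = 2) :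
    -- each `χ^j` is a well-defined algebra homomorphism `D → 𝕜`
    (∀ j : ZMod 4, ∃ f : DAlg 𝕜 ξ ν →ₐ[𝕜] 𝕜, IsChi 𝕜 ξ ν f j) ∧
    -- every algebra homomorphism `D → 𝕜` equals `χ^j` for a unique `j`
    (∀ f : DAlg 𝕜 ξ ν →ₐ[𝕜] 𝕜, ∃! j : ZMod 4, IsChi 𝕜 ξ ν f j) ∧
    -- hence the `1`-dimensional left `D`-modules are, up to isomorphism, exactly the
    -- four modules `𝕜_{χ^j}`: every representation of `D` on a `1`-dimensional space has
    -- a (unique) character `χ^j` acting through scalars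
    (∀ (V : Type) (_ : AddCommGroup V) (_ : Module 𝕜 V), Module.finrank 𝕜 V = 1 →
      ∀ ρ : DAlg 𝕜 ξ ν →ₐ[𝕜] Module.End 𝕜 V, ∃! j : ZMod 4, ∀ v : V, ChiOn ρ j v) := by
  exact ⟨chi_exists 𝕜 ξ ν hξ, chi_unique 𝕜 ξ ν hξ hν,
    fun V _ _ hV ρ => chi_module 𝕜 ξ ν hξ hν V hV ρ⟩
end

section
/- For every pair (i,j) ∈ Λ, the stated formulas define a left D-module structure on the 2-dimensional vector space V_{i,j} = k·e₁ ⊕ k·e₂, and V_{i,j} is a simple D-module. -/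
open scoped TensorProduct

variable (𝕜 : Type) [Field 𝕜] (ξ ν : 𝕜)

variable {𝕜 ξ ν}
variable {V W : Type} [AddCommGroup V] [Module 𝕜 V] [AddCommGroup W] [Module 𝕜 W]

/-- The endomorphism of `𝕜 × 𝕜` with matrix `(p q; r s)`. -/
def matEnd {F : Type} [Field F] (p q r s : F) : Module.End F (F × F) where
  toFun v := (p * v.1 + q * v.2, r * v.1 + s * v.2)
  map_add' v w := by ext <;> simp <;> ring
  map_smul' t v := by ext <;> simp <;> ring

theorem matEnd_apply {F : Type} [Field F] (p q r s : F) (v : F × F) :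
    matEnd p q r s v = (p * v.1 + q * v.2, r * v.1 + s * v.2) := rfl

/-- The action of the generators, with `A = ξ ^ i` and `G = ξ ^ j`. -/
def genAct {F : Type} [Field F] (ξ ν A G : F) : DGen → Module.End F (F × F)
  | .a => matEnd A 0 0 (A * ξ ^ 3)
  | .b => matEnd 0 (A ^ 2) 0 0
  | .c => matEnd 0 1 0 0
  | .d => matEnd (A ^ 3) 0 0 (ξ * A ^ 3)
  | .g => matEnd G 0 0 (-G)
  | .x => matEnd 0 (ν * ξ / 2 * (A + A ^ 3 * G)) (ν * ξ * (A ^ 3 - A * G)) 0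

theorem genAct_rel {F : Type} [Field F] [CharZero F] (ξ ν A G : F) (hξ : ξ ^ 2 = -1)
    (hν : ν ^ 2 = 2) (hA : A ^ 4 = 1) (hG : G ^ 4 = 1) (y z : FreeAlgebra F DGen)
    (h : DRel F ξ ν y z) :
    FreeAlgebra.lift F (genAct ξ ν A G) y = FreeAlgebra.lift F (genAct ξ ν A G) z := by
  cases h <;> apply LinearMap.ext <;> rintro ⟨u, v⟩ <;>
    simp only [map_mul, map_smul, map_add, map_sub, map_neg, map_pow, map_one, map_zero,
      FreeAlgebra.lift_ι_apply, genAct, matEnd_apply, Module.End.mul_apply, LinearMap.smul_apply,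
      LinearMap.add_apply, LinearMap.sub_apply, LinearMap.neg_apply, Module.End.one_apply,
      LinearMap.zero_apply, pow_succ, pow_zero, one_mul, Prod.smul_mk, Prod.mk_add_mk,
      Prod.mk_sub_mk, Prod.neg_mk, smul_eq_mul, Prod.mk.injEq, Prod.mk_eq_zero] <;>
    constructor <;> grind

/-- For every pair `(i,j) ∈ Λ` (i.e. `2i ≠ j` in `ℤ/4`), the stated
formulas define a left `D`-module structure on the 2-dimensional space
`V_{i,j} = 𝕜e₁ ⊕ 𝕜e₂`, and `V_{i,j}` is a simple `D`-module. -/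
theorem stmt_6 (𝕜 : Type) [Field 𝕜] [IsAlgClosed 𝕜] [CharZero 𝕜]
    (ξ ν : 𝕜) (hξ : IsPrimitiveRoot ξ 4) (hν : ν ^ 2 = 2)
    (i j : ZMod 4) (hij : 2 * i ≠ j) :
    ∃ ρ : DAlg 𝕜 ξ ν →ₐ[𝕜] Module.End 𝕜 (𝕜 × 𝕜),
      VijOn ρ i j ((1 : 𝕜), (0 : 𝕜)) ((0 : 𝕜), (1 : 𝕜)) ∧ DSimpleRep ρ := by
  have hξ2 : ξ ^ 2 = -1 := by
    have h4 := hξ.pow_eq_one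
    have h2 : ξ ^ 2 ≠ 1 := hξ.pow_ne_one_of_pos_of_lt (by norm_num) (by norm_num)
    have : (ξ ^ 2 - 1) * (ξ ^ 2 + 1) = 0 := by linear_combination h4
    rcases mul_eq_zero.1 this with h | h
    · exact absurd (sub_eq_zero.1 h) h2
    · exact eq_neg_of_add_eq_zero_left h
  have hpow : ∀ n : ℕ, (ξ ^ n) ^ 4 = 1 := fun n => by
    rw [← pow_mul, mul_comm, pow_mul, hξ.pow_eq_one, one_pow]
  have hξ0 : ξ ≠ 0 := hξ.ne_zero (by norm_num)
  have hν0 : ν ≠ 0 := by rintro rfl; norm_num at hν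
  set A := ξ ^ i.val with hAdef
  set G := ξ ^ j.val with hGdef
  have hA : A ^ 4 = 1 := hpow _
  have hG : G ^ 4 = 1 := hpow _
  have hA0 : A ≠ 0 := pow_ne_zero _ hξ0
  have hAG : A ^ 2 ≠ G := by
    intro h
    apply hij
    have h1 : ξ ^ (i.val * 2 + j.val * 3) = 1 := by
      rw [pow_add, pow_mul, pow_mul, ← hAdef, ← hGdef, h]
      linear_combination hG
    have h2 := (ZMod.natCast_eq_zero_iff _ 4).2 (hξ.dvd_of_pow_eq_one _ h1)
    push_cast [ZMod.natCast_zmod_val] at h2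
    have h4 : (4 : ZMod 4) = 0 := rfl
    linear_combination h2 - j * h4
  have hAinv : A⁻¹ = A ^ 3 := by
    apply inv_eq_of_mul_eq_one_right
    linear_combination hA
  have hneg : (-1 : 𝕜) ^ i.val = A ^ 2 := by
    rw [hAdef, ← hξ2, ← pow_mul, ← pow_mul, mul_comm]
  let ρ : DAlg 𝕜 ξ ν →ₐ[𝕜] Module.End 𝕜 (𝕜 × 𝕜) :=
    RingQuot.liftAlgHom 𝕜 ⟨FreeAlgebra.lift 𝕜 (genAct ξ ν A G),
      fun {y z} h => genAct_rel ξ ν A G hξ2 hν hA hG y z h⟩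
  have hρ : ∀ t : DGen, ρ (RingQuot.mkAlgHom 𝕜 (DRel 𝕜 ξ ν) (FreeAlgebra.ι 𝕜 t))
      = genAct ξ ν A G t := fun t => by
    simp only [ρ, RingQuot.liftAlgHom_mkAlgHom_apply, FreeAlgebra.lift_ι_apply]
  have hV : VijOn ρ i j ((1 : 𝕜), (0 : 𝕜)) ((0 : 𝕜), (1 : 𝕜)) := by
    have e1 : ξ ^ (i.val + 3) = A * ξ ^ 3 := pow_add _ _ _
    have e2 : ξ ^ (j.val + 2) = -G := by rw [pow_add, hξ2]; ring
    have e3 : ξ ^ (3 * i.val) = A ^ 3 := by rw [mul_comm, pow_mul]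
    have e4 : ξ ^ (i.val + j.val) = A * G := pow_add _ _ _
    have e5 : ξ ^ (3 * i.val + j.val) = A ^ 3 * G := by rw [pow_add, e3]
    simp only [VijOn, gA, gB, gC, gD, gG, gX, hρ, genAct, matEnd_apply, e1, e2, e3, e4, e5,
      hneg, ← hAdef, ← hGdef, hAinv]
    simp
  refine ⟨ρ, hV, inferInstance, fun U hU => ?_⟩
  rw [or_iff_not_imp_left]
  intro hbot
  obtain ⟨⟨p, q⟩, hw, hne⟩ := (Submodule.ne_bot_iff U).1 hbot
  have h1 : ((1 : 𝕜), (0 : 𝕜)) ∈ U := by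
    by_cases hq : q = 0
    · subst hq
      have hp : p ≠ 0 := fun h => hne (by rw [h]; rfl)
      simpa [hp] using U.smul_mem p⁻¹ hw
    · have := hU (gC 𝕜 ξ ν) _ hw
      simp only [gC, hρ, genAct, matEnd_apply] at this
      simpa [hq] using U.smul_mem q⁻¹ this
  have h2 : ((0 : 𝕜), (1 : 𝕜)) ∈ U := by
    have := hU (gX 𝕜 ξ ν) _ h1
    simp only [gX, hρ, genAct, matEnd_apply, mul_one, mul_zero, zero_add, add_zero] at this
    have hc : ν * ξ * (A ^ 3 - A * G) ≠ 0 := by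
      have : A ^ 3 - A * G = A * (A ^ 2 - G) := by ring
      rw [this]
      exact mul_ne_zero (mul_ne_zero hν0 hξ0) (mul_ne_zero hA0 (sub_ne_zero.2 hAG))
    have h3 := U.smul_mem (ν * ξ * (A ^ 3 - A * G))⁻¹ this
    rwa [Prod.smul_mk, smul_zero, smul_eq_mul, inv_mul_cancel₀ hc] at h3
  rw [eq_top_iff]
  rintro ⟨s, t⟩ -
  simpa using U.add_mem (U.smul_mem s h1) (U.smul_mem t h2)
end

section
/- For every (i,j) ∈ Λ, the simple 2-dimensional module V_{i,j} is a projective left D-module (equivalently, V_{i,j} is its own projective cover). -/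
open scoped TensorProduct

variable (𝕜 : Type) [Field 𝕜] (ξ ν : 𝕜)

variable {𝕜 ξ ν}
variable {V W : Type} [AddCommGroup V] [Module 𝕜 V] [AddCommGroup W] [Module 𝕜 W]

/-- Averaging over the powers of an operator of order four. -/
theorem avg_eigen {𝕜 W : Type} [Field 𝕜] [AddCommGroup W] [Module 𝕜 W]
    (T : W →ₗ[𝕜] W) (l : 𝕜) (hl : l ^ 4 = 1) (hT : ∀ w, T (T (T (T w))) = w) (w : W) :
    T (w + l ^ 3 • T w + l ^ 2 • T (T w) + l • T (T (T w))) =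
      l • (w + l ^ 3 • T w + l ^ 2 • T (T w) + l • T (T (T w))) := by
  simp only [map_add, map_smul, hT, smul_add, smul_smul]
  have h1 : l * l ^ 3 = 1 := by rw [← hl]; ring
  have h2 : l * l ^ 2 = l ^ 3 := by ring
  have h3 : l * l = l ^ 2 := by ring
  rw [h1, h2, h3, one_smul]
  abel

/-- Two actions of `D` intertwined on generators are intertwined. -/
theorem intertwine_of_gens {𝕜 : Type} [Field 𝕜] {ξ ν : 𝕜} {V W : Type}
    [AddCommGroup V] [Module 𝕜 V] [AddCommGroup W] [Module 𝕜 W]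
    (ρ : DAlg 𝕜 ξ ν →ₐ[𝕜] Module.End 𝕜 V) (ρW : DAlg 𝕜 ξ ν →ₐ[𝕜] Module.End 𝕜 W)
    (σ : V →ₗ[𝕜] W)
    (hA : ∀ v, σ (ρ (gA 𝕜 ξ ν) v) = ρW (gA 𝕜 ξ ν) (σ v))
    (hB : ∀ v, σ (ρ (gB 𝕜 ξ ν) v) = ρW (gB 𝕜 ξ ν) (σ v))
    (hC : ∀ v, σ (ρ (gC 𝕜 ξ ν) v) = ρW (gC 𝕜 ξ ν) (σ v))
    (hD : ∀ v, σ (ρ (gD 𝕜 ξ ν) v) = ρW (gD 𝕜 ξ ν) (σ v))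
    (hX : ∀ v, σ (ρ (gX 𝕜 ξ ν) v) = ρW (gX 𝕜 ξ ν) (σ v))
    (hG : ∀ v, σ (ρ (gG 𝕜 ξ ν) v) = ρW (gG 𝕜 ξ ν) (σ v))
    (z : DAlg 𝕜 ξ ν) : ∀ v, σ (ρ z v) = ρW z (σ v) := by
  obtain ⟨y, rfl⟩ := RingQuot.mkAlgHom_surjective 𝕜 (DRel 𝕜 ξ ν) z
  induction y using FreeAlgebra.induction with
  | grade0 r => intro v; simp [AlgHom.commutes, Module.algebraMap_end_apply]
  | grade1 t =>
    cases t
    · exact hA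
    · exact hB
    · exact hC
    · exact hD
    · exact hX
    · exact hG
  | mul p q hp hq => intro v; simp [map_mul, hp, hq]
  | add p q hp hq => intro v; simp [map_add, hp, hq]

/-- Relations of `D` read off in `D` itself. -/
theorem mk_rel {𝕜 : Type} [Field 𝕜] {ξ ν : 𝕜} {p q : FreeAlgebra 𝕜 DGen} (h : DRel 𝕜 ξ ν p q) :
    RingQuot.mkAlgHom 𝕜 (DRel 𝕜 ξ ν) p = RingQuot.mkAlgHom 𝕜 (DRel 𝕜 ξ ν) q :=
  RingQuot.mkAlgHom_rel 𝕜 h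

/-- For every `(i,j) ∈ Λ`, the simple 2-dimensional module `V_{i,j}` is a
projective left `D`-module: every surjection of `D`-modules onto `V_{i,j}` splits
`D`-linearly (equivalently, `V_{i,j}` is its own projective cover). -/
theorem stmt_10 (𝕜 : Type) [Field 𝕜] [IsAlgClosed 𝕜] [CharZero 𝕜]
    (ξ ν : 𝕜) (hξ : IsPrimitiveRoot ξ 4) (hν : ν ^ 2 = 2)
    (i j : ZMod 4) (hij : 2 * i ≠ j)
    (ρ : DAlg 𝕜 ξ ν →ₐ[𝕜] Module.End 𝕜 (𝕜 × 𝕜))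
    (hρ : VijOn ρ i j ((1 : 𝕜), (0 : 𝕜)) ((0 : 𝕜), (1 : 𝕜))) :
    ∀ (W : Type) (_ : AddCommGroup W) (_ : Module 𝕜 W)
      (ρW : DAlg 𝕜 ξ ν →ₐ[𝕜] Module.End 𝕜 W) (π : W →ₗ[𝕜] 𝕜 × 𝕜),
      (∀ (z : DAlg 𝕜 ξ ν) (w : W), π (ρW z w) = ρ z (π w)) →
      Function.Surjective π →
      ∃ σ : (𝕜 × 𝕜) →ₗ[𝕜] W,
        (∀ (z : DAlg 𝕜 ξ ν) (v : 𝕜 × 𝕜), σ (ρ z v) = ρW z (σ v)) ∧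
        π ∘ₗ σ = LinearMap.id := by
  intro W _ _ ρW π hπ hsurj
  obtain ⟨a1, a2, b1, b2, c1, c2, d1, d2, g1, g2, x1, x2⟩ := hρ
  -- scalars
  have hξ4 : ξ ^ 4 = 1 := hξ.pow_eq_one
  have hξ2 : ξ ^ 2 = -1 := by
    have h : (ξ ^ 2 - 1) * (ξ ^ 2 + 1) = 0 := by linear_combination hξ4
    rcases mul_eq_zero.1 h with h | h
    · exact absurd (sub_eq_zero.1 h) (hξ.pow_ne_one_of_pos_of_lt (by norm_num) (by norm_num))
    · exact eq_neg_of_add_eq_zero_left h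
  have hξ0 : ξ ≠ 0 := by rintro rfl; norm_num at hξ2
  have hν0 : ν ≠ 0 := by rintro rfl; norm_num at hν
  have hlm : (ξ ^ i.val) ^ 2 ≠ ξ ^ j.val := by
    intro h
    apply hij
    rw [← pow_mul] at h
    have hd : 4 ∣ i.val * 2 + 3 * j.val := by
      rw [← hξ.pow_eq_one_iff_dvd, pow_add, h, ← pow_add,
        show j.val + 3 * j.val = 4 * j.val by ring, pow_mul, hξ4, one_pow]
    have h2 := (ZMod.natCast_eq_natCast_iff (i.val * 2) j.val 4).2 (by
      unfold Nat.ModEq; omega)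
    simpa [mul_comm] using h2
  have hm1 : (-1 : 𝕜) ^ i.val = (ξ ^ i.val) ^ 2 := by rw [← hξ2, ← pow_mul, ← pow_mul, mul_comm]
  have hl4 : (ξ ^ i.val) ^ 4 = 1 := by rw [← pow_mul, mul_comm, pow_mul, hξ4, one_pow]
  have hm4 : (ξ ^ j.val) ^ 4 = 1 := by rw [← pow_mul, mul_comm, pow_mul, hξ4, one_pow]
  have e3 : ξ ^ (3 * i.val) = (ξ ^ i.val) ^ 3 := by rw [mul_comm, pow_mul]
  rw [pow_add] at a2 g2
  rw [e3, pow_add] at x1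
  rw [pow_add, e3] at x2
  rw [hm1] at b2
  generalize ξ ^ i.val = l at *
  generalize ξ ^ j.val = m at *
  have hl0 : l ≠ 0 := by rintro rfl; norm_num at hl4
  have hs : ν * ξ * (l ^ 3 - l * m) ≠ 0 := by
    refine mul_ne_zero (mul_ne_zero hν0 hξ0) ?_
    have : l ^ 3 - l * m = l * (l ^ 2 - m) := by ring
    rw [this]
    exact mul_ne_zero hl0 (sub_ne_zero.2 hlm)
  have hlinv : l⁻¹ = l ^ 3 := by
    rw [inv_eq_iff_eq_inv]
    exact eq_inv_of_mul_eq_one_left (by rw [← hl4]; ring)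
  rw [hlinv] at d1 d2
  -- relations in W
  have rel : ∀ {p q : FreeAlgebra 𝕜 DGen}, DRel 𝕜 ξ ν p q → ∀ w,
      ρW (RingQuot.mkAlgHom 𝕜 (DRel 𝕜 ξ ν) p) w = ρW (RingQuot.mkAlgHom 𝕜 (DRel 𝕜 ξ ν) q) w :=
    fun h w => by rw [mk_rel h]
  have rac : ∀ w, ρW (gA 𝕜 ξ ν) (ρW (gC 𝕜 ξ ν) w) = ξ • ρW (gC 𝕜 ξ ν) (ρW (gA 𝕜 ξ ν) w) := by
    intro w; simpa [gA, gC] using rel DRel.ac w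
  have rcc : ∀ w, ρW (gC 𝕜 ξ ν) (ρW (gC 𝕜 ξ ν) w) = 0 := by
    intro w; simpa [gC] using rel DRel.csq w
  have raac : ∀ w, ρW (gB 𝕜 ξ ν) w = ρW (gA 𝕜 ξ ν) (ρW (gA 𝕜 ξ ν) (ρW (gC 𝕜 ξ ν) w)) := by
    intro w; simpa [gA, gB, gC] using (rel DRel.aac w).symm
  have ra4 : ∀ w, ρW (gA 𝕜 ξ ν) (ρW (gA 𝕜 ξ ν) (ρW (gA 𝕜 ξ ν) (ρW (gA 𝕜 ξ ν) w))) = w := by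
    intro w; simpa [gA, pow_succ] using rel DRel.afour w
  have rg4 : ∀ w, ρW (gG 𝕜 ξ ν) (ρW (gG 𝕜 ξ ν) (ρW (gG 𝕜 ξ ν) (ρW (gG 𝕜 ξ ν) w))) = w := by
    intro w; simpa [gG, pow_succ] using rel DRel.gfour w
  have rda : ∀ w, ρW (gD 𝕜 ξ ν) (ρW (gA 𝕜 ξ ν) w) = w := by
    intro w
    have h1 := rel DRel.adcomm w
    have h2 := rel DRel.adone w
    rw [h1] at h2
    simpa [gA, gD] using h2
  have rxx : ∀ w, ρW (gX 𝕜 ξ ν) (ρW (gX 𝕜 ξ ν) w) =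
      ρW (gG 𝕜 ξ ν) (ρW (gG 𝕜 ξ ν) w) - w := by
    intro w; simpa [gX, gG] using rel DRel.xsq w
  have rgx : ∀ w, ρW (gG 𝕜 ξ ν) (ρW (gX 𝕜 ξ ν) w) = -ρW (gX 𝕜 ξ ν) (ρW (gG 𝕜 ξ ν) w) := by
    intro w; simpa [gX, gG] using rel DRel.gx w
  have rag : ∀ w, ρW (gA 𝕜 ξ ν) (ρW (gG 𝕜 ξ ν) w) = ρW (gG 𝕜 ξ ν) (ρW (gA 𝕜 ξ ν) w) := by
    intro w; simpa [gA, gG] using rel DRel.ag w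
  have rcg : ∀ w, ρW (gC 𝕜 ξ ν) (ρW (gG 𝕜 ξ ν) w) = -ρW (gG 𝕜 ξ ν) (ρW (gC 𝕜 ξ ν) w) := by
    intro w; simpa [gC, gG] using rel DRel.cg w
  have rax : ∀ w, ρW (gA 𝕜 ξ ν) (ρW (gX 𝕜 ξ ν) w) =
      (ν * ξ) • (ρW (gB 𝕜 ξ ν) w + ρW (gG 𝕜 ξ ν) (ρW (gC 𝕜 ξ ν) w))
        - ξ • ρW (gX 𝕜 ξ ν) (ρW (gA 𝕜 ξ ν) w) := by
    intro w; simpa [gA, gB, gC, gG, gX] using rel DRel.axr w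
  have rcx : ∀ w, ρW (gC 𝕜 ξ ν) (ρW (gX 𝕜 ξ ν) w) =
      (ν * ξ) • (ρW (gD 𝕜 ξ ν) w - ρW (gG 𝕜 ξ ν) (ρW (gA 𝕜 ξ ν) w))
        - ξ • ρW (gX 𝕜 ξ ν) (ρW (gC 𝕜 ξ ν) w) := by
    intro w; simpa [gA, gC, gD, gG, gX] using rel DRel.cxr w
  have rca0 : ∀ w, ρW (gC 𝕜 ξ ν) w = 0 → ρW (gC 𝕜 ξ ν) (ρW (gA 𝕜 ξ ν) w) = 0 := by
    intro w hw
    have h := rac w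
    rw [hw, map_zero] at h
    exact (smul_eq_zero.1 h.symm).resolve_left hξ0
  have rcg0 : ∀ w, ρW (gC 𝕜 ξ ν) w = 0 → ρW (gC 𝕜 ξ ν) (ρW (gG 𝕜 ξ ν) w) = 0 := by
    intro w hw
    rw [rcg, hw, map_zero, neg_zero]
  -- lift of e₁
  obtain ⟨w0, hw0⟩ := hsurj ((0 : 𝕜), (1 : 𝕜))
  obtain ⟨v1, hp1, hc1, ha1, hg1⟩ : ∃ v1 : W, π v1 = ((1 : 𝕜), (0 : 𝕜)) ∧ ρW (gC 𝕜 ξ ν) v1 = 0 ∧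
      ρW (gA 𝕜 ξ ν) v1 = l • v1 ∧ ρW (gG 𝕜 ξ ν) v1 = m • v1 := by
    obtain ⟨u, hup, huc⟩ : ∃ u : W, π u = ((1 : 𝕜), (0 : 𝕜)) ∧ ρW (gC 𝕜 ξ ν) u = 0 :=
      ⟨ρW (gC 𝕜 ξ ν) w0, by rw [hπ, hw0, c2], rcc _⟩
    obtain ⟨u', hup', huc', hua'⟩ : ∃ u : W, π u = ((4 : 𝕜), (0 : 𝕜)) ∧ ρW (gC 𝕜 ξ ν) u = 0 ∧
        ρW (gA 𝕜 ξ ν) u = l • u := by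
      refine ⟨_, ?_, ?_, avg_eigen (ρW (gA 𝕜 ξ ν)) l hl4 ra4 u⟩
      · simp only [map_add, map_smul, hπ, hup, a1]
        ext
        · simp; linear_combination 3 * hl4
        · simp
      · simp [huc, rca0 _ huc, rca0 _ (rca0 _ huc), rca0 _ (rca0 _ (rca0 _ huc))]
    have h16 : (16 : 𝕜) ≠ 0 := by norm_num
    refine ⟨(16 : 𝕜)⁻¹ • (u' + m ^ 3 • ρW (gG 𝕜 ξ ν) u' + m ^ 2 • ρW (gG 𝕜 ξ ν) (ρW (gG 𝕜 ξ ν) u')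
      + m • ρW (gG 𝕜 ξ ν) (ρW (gG 𝕜 ξ ν) (ρW (gG 𝕜 ξ ν) u'))), ?_, ?_, ?_, ?_⟩
    · have e4 : ((4 : 𝕜), (0 : 𝕜)) = (4 : 𝕜) • ((1 : 𝕜), (0 : 𝕜)) := by simp
      simp only [map_add, map_smul, hπ, hup', e4, g1]
      ext
      · simp; field_simp; linear_combination 12 * hm4
      · simp
    · simp [huc', rcg0 _ huc', rcg0 _ (rcg0 _ huc'), rcg0 _ (rcg0 _ (rcg0 _ huc'))]
    · simp only [map_smul, map_add, rag, hua', smul_add, smul_smul]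
      simp only [mul_comm]
    · rw [map_smul, avg_eigen (ρW (gG 𝕜 ξ ν)) m hm4 rg4 u', smul_comm]
  have hd1 : ρW (gD 𝕜 ξ ν) v1 = l ^ 3 • v1 := by
    have h := rda v1
    rw [ha1, map_smul] at h
    rw [← hlinv]
    nth_rewrite 2 [← h]
    rw [smul_smul, inv_mul_cancel₀ hl0, one_smul]
  have hb1 : ρW (gB 𝕜 ξ ν) v1 = 0 := by rw [raac, hc1, map_zero, map_zero]
  set s := ν * ξ * (l ^ 3 - l * m) with hsdef
  obtain ⟨v2, hv2⟩ : ∃ v2, v2 = s⁻¹ • ρW (gX 𝕜 ξ ν) v1 := ⟨_, rfl⟩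
  have hx1 : ρW (gX 𝕜 ξ ν) v1 = s • v2 := by
    rw [hv2, smul_smul, mul_inv_cancel₀ hs, one_smul]
  have hp2 : π v2 = ((0 : 𝕜), (1 : 𝕜)) := by
    rw [hv2, map_smul, hπ, hp1, x1, smul_smul, inv_mul_cancel₀ hs, one_smul]
  have cancel : ∀ {y z : W}, s • y = s • z → y = z := fun h => smul_right_injective W hs h
  have hc2 : ρW (gC 𝕜 ξ ν) v2 = v1 := by
    apply cancel
    rw [← map_smul, ← hx1, rcx, hc1, map_zero, smul_zero, sub_zero, ha1, map_smul, hg1, hd1, hsdef]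
    module
  have ha2 : ρW (gA 𝕜 ξ ν) v2 = (l * ξ ^ 3) • v2 := by
    apply cancel
    rw [← map_smul, ← hx1, rax, hc1, map_zero, hb1, ha1, map_smul, hx1]
    have : ξ ^ 3 = - ξ := by linear_combination ξ * hξ2
    rw [this]
    module
  have hb2 : ρW (gB 𝕜 ξ ν) v2 = l ^ 2 • v1 := by
    rw [raac, hc2, ha1, map_smul, ha1, smul_smul, sq]
  have hd2 : ρW (gD 𝕜 ξ ν) v2 = (ξ * l ^ 3) • v2 := by
    have h := rda v2
    rw [ha2, map_smul] at h
    nth_rewrite 2 [← h]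
    rw [smul_smul]
    have : ξ * l ^ 3 * (l * ξ ^ 3) = 1 := by linear_combination l ^ 4 * hξ4 + hl4
    rw [this, one_smul]
  have hg2 : ρW (gG 𝕜 ξ ν) v2 = (m * ξ ^ 2) • v2 := by
    apply cancel
    rw [← map_smul, ← hx1, rgx, hg1, map_smul, hx1, hξ2]
    module
  have hx2 : ρW (gX 𝕜 ξ ν) v2 = (ν * ξ / 2 * (l + l ^ 3 * m)) • v1 := by
    apply cancel
    rw [← map_smul, ← hx1, rxx, hg1, map_smul, hg1, smul_smul, smul_smul]
    have : s * (ν * ξ / 2 * (l + l ^ 3 * m)) = m * m - 1 := by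
      have h : s * (ν * ξ / 2 * (l + l ^ 3 * m)) =
        ν ^ 2 / 2 * ξ ^ 2 * (l ^ 4 + l ^ 4 * l ^ 2 * m - l ^ 2 * m - l ^ 4 * m ^ 2) := by
        rw [hsdef]; ring
      rw [h, hν, hξ2, hl4]; ring
    rw [this]
    module
  refine ⟨(LinearMap.toSpanSingleton 𝕜 W v1).coprod (LinearMap.toSpanSingleton 𝕜 W v2), ?_, ?_⟩
  · have dec : ∀ v : 𝕜 × 𝕜, v = v.1 • ((1 : 𝕜), (0 : 𝕜)) + v.2 • ((0 : 𝕜), (1 : 𝕜)) := by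
      intro v; ext <;> simp
    apply intertwine_of_gens <;> intro v <;> rw [dec v] <;>
      simp only [map_add, map_smul, a1, a2, b1, b2, c1, c2, d1, d2, g1, g2, x1, x2] <;>
      simp [ha1, ha2, hb1, hb2, hc1, hc2, hd1, hd2, hg1, hg2, hx1, hx2, smul_smul]
  · ext <;> simp [hp1, hp2]
end

section
/- The 4-dimensional left D-module P is indecomposable; the subspaces P_i = span{p_i, ..., p₄} (i = 1,2,3,4) are D-submodules, and P = P₁ ⊃ P₂ ⊃ P₃ ⊃ P₄ ⊃ 0 is a composition series of P with composition factors P₄ ≅ k_{χ⁰}, P₃/P₄ ≅ k_{χ¹}, P₂/P₃ ≅ k_{χ³}, P₁/P₂ ≅ k_{χ⁰}. -/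
open scoped TensorProduct

variable (𝕜 : Type) [Field 𝕜] (ξ ν : 𝕜)

variable {𝕜 ξ ν}
variable {V W : Type} [AddCommGroup V] [Module 𝕜 V] [AddCommGroup W] [Module 𝕜 W]

/-- The class of the vector `v` in the quotient by the invariant subspace `U` is acted on
by `D` through the character `χ^j`. -/
def ChiModOn {𝕜 : Type} [Field 𝕜] {ξ ν : 𝕜} {V : Type} [AddCommGroup V] [Module 𝕜 V]
    (ρ : DAlg 𝕜 ξ ν →ₐ[𝕜] Module.End 𝕜 V) (j : ZMod 4) (v : V) (U : Submodule 𝕜 V) : Prop :=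
  ρ (gA 𝕜 ξ ν) v - ξ ^ j.val • v ∈ U ∧ ρ (gB 𝕜 ξ ν) v ∈ U ∧ ρ (gC 𝕜 ξ ν) v ∈ U ∧
  ρ (gD 𝕜 ξ ν) v - (ξ ^ j.val)⁻¹ • v ∈ U ∧ ρ (gX 𝕜 ξ ν) v ∈ U ∧
  ρ (gG 𝕜 ξ ν) v - (-1 : 𝕜) ^ j.val • v ∈ U

theorem dinv_of_gens {𝕜 : Type} [Field 𝕜] {ξ ν : 𝕜} {V : Type} [AddCommGroup V] [Module 𝕜 V]
    (ρ : DAlg 𝕜 ξ ν →ₐ[𝕜] Module.End 𝕜 V) (U : Submodule 𝕜 V)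
    (ha : ∀ w ∈ U, ρ (gA 𝕜 ξ ν) w ∈ U) (hb : ∀ w ∈ U, ρ (gB 𝕜 ξ ν) w ∈ U)
    (hc : ∀ w ∈ U, ρ (gC 𝕜 ξ ν) w ∈ U) (hd : ∀ w ∈ U, ρ (gD 𝕜 ξ ν) w ∈ U)
    (hx : ∀ w ∈ U, ρ (gX 𝕜 ξ ν) w ∈ U) (hg : ∀ w ∈ U, ρ (gG 𝕜 ξ ν) w ∈ U) :
    DInvariant ρ U := by
  intro z
  obtain ⟨y, rfl⟩ := RingQuot.mkAlgHom_surjective 𝕜 (DRel 𝕜 ξ ν) z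
  induction y using FreeAlgebra.induction with
  | grade0 r =>
    intro w hw
    rw [AlgHom.commutes, AlgHom.commutes, Module.algebraMap_end_apply]
    exact U.smul_mem _ hw
  | grade1 s =>
    cases s
    · exact ha
    · exact hb
    · exact hc
    · exact hd
    · exact hx
    · exact hg
  | mul p q hp hq =>
    intro w hw
    rw [map_mul, map_mul, Module.End.mul_apply]
    exact hp _ (hq _ hw)
  | add p q hp hq =>
    intro w hw
    rw [map_add, map_add, LinearMap.add_apply]
    exact U.add_mem (hp _ hw) (hq _ hw)

theorem end_formula {𝕜 : Type} [Field 𝕜] (f : Module.End 𝕜 (Fin 4 → 𝕜)) (w : Fin 4 → 𝕜) :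
    f w = w 0 • f (Pi.single 0 1) + w 1 • f (Pi.single 1 1) + w 2 • f (Pi.single 2 1)
      + w 3 • f (Pi.single 3 1) := by
  rw [← map_smul, ← map_smul, ← map_smul, ← map_smul, ← map_add, ← map_add, ← map_add]
  congr 1
  ext i
  fin_cases i <;> simp

theorem mem_P1 {𝕜 : Type} [Field 𝕜] (w : Fin 4 → 𝕜) :
    w ∈ Submodule.span 𝕜 {(Pi.single 0 1 : Fin 4 → 𝕜), Pi.single 1 1, Pi.single 2 1,
      Pi.single 3 1} := by
  simp only [Submodule.mem_span_insert, Submodule.mem_span_singleton]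
  refine ⟨w 0, _, ⟨w 1, _, ⟨w 2, _, ⟨w 3, rfl⟩, rfl⟩, rfl⟩, ?_⟩
  ext i
  fin_cases i <;> simp

theorem mem_P2 {𝕜 : Type} [Field 𝕜] (w : Fin 4 → 𝕜) :
    w ∈ Submodule.span 𝕜 {(Pi.single 1 1 : Fin 4 → 𝕜), Pi.single 2 1, Pi.single 3 1} ↔
      w 0 = 0 := by
  simp only [Submodule.mem_span_insert, Submodule.mem_span_singleton]
  constructor
  · rintro ⟨r, _, ⟨s, _, ⟨t, rfl⟩, rfl⟩, rfl⟩
    simp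
  · intro h
    refine ⟨w 1, _, ⟨w 2, _, ⟨w 3, rfl⟩, rfl⟩, ?_⟩
    ext i
    fin_cases i <;> simp [h]

theorem mem_P3 {𝕜 : Type} [Field 𝕜] (w : Fin 4 → 𝕜) :
    w ∈ Submodule.span 𝕜 {(Pi.single 2 1 : Fin 4 → 𝕜), Pi.single 3 1} ↔
      w 0 = 0 ∧ w 1 = 0 := by
  simp only [Submodule.mem_span_insert, Submodule.mem_span_singleton]
  constructor
  · rintro ⟨s, _, ⟨t, rfl⟩, rfl⟩
    simp
  · intro h
    refine ⟨w 2, _, ⟨w 3, rfl⟩, ?_⟩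
    ext i
    fin_cases i <;> simp [h]

theorem mem_P4 {𝕜 : Type} [Field 𝕜] (w : Fin 4 → 𝕜) :
    w ∈ Submodule.span 𝕜 {(Pi.single 3 1 : Fin 4 → 𝕜)} ↔
      w 0 = 0 ∧ w 1 = 0 ∧ w 2 = 0 := by
  simp only [Submodule.mem_span_singleton]
  constructor
  · rintro ⟨t, rfl⟩
    simp
  · intro h
    refine ⟨w 3, ?_⟩
    ext i
    fin_cases i <;> simp [h]

/-- The 4-dimensional left `D`-module `P` is indecomposable; the
subspaces `Pᵢ = span{pᵢ, …, p₄}` are `D`-submodules and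
`P = P₁ ⊃ P₂ ⊃ P₃ ⊃ P₄ ⊃ 0` is a composition series of `P`, with composition factors
`P₄ ≅ 𝕜_{χ⁰}`, `P₃/P₄ ≅ 𝕜_{χ¹}`, `P₂/P₃ ≅ 𝕜_{χ³}` and `P₁/P₂ ≅ 𝕜_{χ⁰}`. -/
theorem stmt_11 (𝕜 : Type) [Field 𝕜] [IsAlgClosed 𝕜] [CharZero 𝕜]
    (ξ ν : 𝕜) (hξ : IsPrimitiveRoot ξ 4) (hν : ν ^ 2 = 2)
    (ρ : DAlg 𝕜 ξ ν →ₐ[𝕜] Module.End 𝕜 (Fin 4 → 𝕜))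
    (hρ : POn ρ 0 (fun m => Pi.single m (1 : 𝕜))) :
    -- `P` is indecomposable
    DIndecRep ρ ∧
    -- the subspaces `Pᵢ` are `D`-submodules forming a strictly decreasing chain
    (letI p : Fin 4 → (Fin 4 → 𝕜) := fun m => Pi.single m (1 : 𝕜)
     letI P₁ : Submodule 𝕜 (Fin 4 → 𝕜) := Submodule.span 𝕜 {p 0, p 1, p 2, p 3}
     letI P₂ : Submodule 𝕜 (Fin 4 → 𝕜) := Submodule.span 𝕜 {p 1, p 2, p 3}
     letI P₃ : Submodule 𝕜 (Fin 4 → 𝕜) := Submodule.span 𝕜 {p 2, p 3}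
     letI P₄ : Submodule 𝕜 (Fin 4 → 𝕜) := Submodule.span 𝕜 {p 3}
     DInvariant ρ P₁ ∧ DInvariant ρ P₂ ∧ DInvariant ρ P₃ ∧ DInvariant ρ P₄ ∧
     P₁ = ⊤ ∧ P₂ < P₁ ∧ P₃ < P₂ ∧ P₄ < P₃ ∧ ⊥ < P₄ ∧
     -- the composition factors: `P₄ ≅ 𝕜_{χ⁰}`, `P₃/P₄ ≅ 𝕜_{χ¹}`, `P₂/P₃ ≅ 𝕜_{χ³}`,
     -- `P₁/P₂ ≅ 𝕜_{χ⁰}` (each factor is 1-dimensional, hence simple, so the chain is a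
     -- composition series)
     ChiOn ρ 0 (p 3) ∧ ChiModOn ρ 1 (p 2) P₄ ∧ ChiModOn ρ 3 (p 1) P₃ ∧
     ChiModOn ρ 0 (p 0) P₂) := by
  have hξ0 : ξ ≠ 0 := hξ.ne_zero (by norm_num)
  have hξ2 : ξ ^ 2 = -1 := by
    have h4 : ξ ^ 4 = 1 := hξ.pow_eq_one
    have h2 : ξ ^ 2 ≠ 1 := hξ.pow_ne_one_of_pos_of_lt (by norm_num) (by norm_num)
    have h : (ξ ^ 2 - 1) * (ξ ^ 2 + 1) = 0 := by linear_combination h4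
    rcases mul_eq_zero.mp h with h | h
    · exact absurd (sub_eq_zero.mp h) h2
    · exact eq_neg_of_add_eq_zero_left h
  have hinv : ξ⁻¹ = -ξ := by
    rw [inv_eq_iff_eq_inv, eq_comm, inv_eq_iff_eq_inv]
    field_simp
    linear_combination -hξ2
  have h3 : ξ ^ 3 = -ξ := by linear_combination ξ * hξ2
  have v1 : (1 : ZMod 4).val = 1 := rfl
  have v3 : (3 : ZMod 4).val = 3 := rfl
  have m3 : (-1 : 𝕜) ^ 3 = -1 := by norm_num
  simp only [POn, ZMod.val_zero, pow_zero, zero_add, pow_one, inv_one, one_smul, mul_one] at hρ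
  obtain ⟨a0, a1, a2, a3, b0, b1, b2, b3, c0, c1, c2, c3, d0, d1, d2, d3, x0, x1, x2, x3,
    g0, g1, g2, g3⟩ := hρ
  have fa : ∀ w, ρ (gA 𝕜 ξ ν) w = ![w 0, -ξ * w 1, ξ * w 2, w 3] := by
    intro w
    rw [end_formula, a0, a1, a2, a3]
    ext i
    fin_cases i <;> simp [mul_comm]
  have fb : ∀ w, ρ (gB 𝕜 ξ ν) w = ![0, 0, w 0, ξ * w 1] := by
    intro w
    rw [end_formula, b0, b1, b2, b3]
    ext i
    fin_cases i <;> simp [mul_comm]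
  have fc : ∀ w, ρ (gC 𝕜 ξ ν) w = ![0, 0, -w 0, ξ * w 1] := by
    intro w
    rw [end_formula, c0, c1, c2, c3]
    ext i
    fin_cases i <;> simp [mul_comm]
  have fd : ∀ w, ρ (gD 𝕜 ξ ν) w = ![w 0, ξ * w 1, -ξ * w 2, w 3] := by
    intro w
    rw [end_formula, d0, d1, d2, d3]
    ext i
    fin_cases i <;> simp [mul_comm]
  have fx : ∀ w, ρ (gX 𝕜 ξ ν) w = ![0, w 0, ν * w 0, -ν * w 1 + w 2] := by
    intro w
    rw [end_formula, x0, x1, x2, x3]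
    ext i
    fin_cases i <;> simp [mul_comm]
  have fg : ∀ w, ρ (gG 𝕜 ξ ν) w = ![w 0, -w 1, -w 2, w 3] := by
    intro w
    rw [end_formula, g0, g1, g2, g3]
    ext i
    fin_cases i <;> simp
  clear a0 a1 a2 a3 b0 b1 b2 b3 c0 c1 c2 c3 d0 d1 d2 d3 x0 x1 x2 x3 g0 g1 g2 g3
  have soc : ∀ U : Submodule 𝕜 (Fin 4 → 𝕜), DInvariant ρ U → U ≠ ⊥ →
      (Pi.single 3 1 : Fin 4 → 𝕜) ∈ U := by
    intro U hU hne
    obtain ⟨w, hw, hw0⟩ := U.ne_bot_iff.mp hne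
    have key : ∀ r : 𝕜, r ≠ 0 → ![0, 0, 0, r] ∈ U → (Pi.single 3 1 : Fin 4 → 𝕜) ∈ U := by
      intro r hr h
      have h' := U.smul_mem r⁻¹ h
      convert h' using 1
      ext i
      fin_cases i <;> simp [hr]
    by_cases h0 : w 0 = 0
    · by_cases h1 : w 1 = 0
      · by_cases h2 : w 2 = 0
        · have h3 : w 3 ≠ 0 := by
            intro h3
            apply hw0
            ext i
            fin_cases i <;> simp [h0, h1, h2, h3]
          apply key _ h3
          convert hw using 1
          ext i
          fin_cases i <;> simp [h0, h1, h2]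
        · apply key _ h2
          have := hU (gX 𝕜 ξ ν) w hw
          rw [fx] at this
          simpa [h0, h1] using this
      · apply key _ (mul_ne_zero hξ0 h1)
        have := hU (gB 𝕜 ξ ν) w hw
        rw [fb] at this
        simpa [h0] using this
    · apply key _ h0
      have := hU (gX 𝕜 ξ ν) _ (hU (gB 𝕜 ξ ν) w hw)
      rw [fx, fb] at this
      simpa using this
  refine ⟨⟨inferInstance, ?_⟩, ?_⟩
  · intro U₁ U₂ h1 h2 hc
    by_contra! hne
    have := (Submodule.disjoint_def.mp hc.disjoint) _ (soc U₁ h1 hne.1) (soc U₂ h2 hne.2)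
    simpa using congrFun this 3
  refine ⟨?_, ?_, ?_, ?_, ?_, ?_, ?_, ?_, ?_, ?_, ?_, ?_, ?_⟩
  · exact fun z w _ => mem_P1 _
  · apply dinv_of_gens <;> intro w hw <;> rw [mem_P2] at hw ⊢ <;>
      simp [fa, fb, fc, fd, fx, fg, hw]
  · apply dinv_of_gens <;> intro w hw <;> rw [mem_P3] at hw ⊢ <;>
      simp [fa, fb, fc, fd, fx, fg, hw]
  · apply dinv_of_gens <;> intro w hw <;> rw [mem_P4] at hw ⊢ <;>
      simp [fa, fb, fc, fd, fx, fg, hw]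
  · exact eq_top_iff.mpr fun w _ => mem_P1 w
  · refine SetLike.lt_iff_le_and_exists.mpr ⟨fun w _ => mem_P1 w, Pi.single 0 1, mem_P1 _, ?_⟩
    rw [mem_P2]
    simp
  · refine SetLike.lt_iff_le_and_exists.mpr ⟨fun w hw => ?_, Pi.single 1 1, ?_, ?_⟩
    · rw [mem_P3] at hw
      rw [mem_P2]
      exact hw.1
    · rw [mem_P2]
      simp
    · rw [mem_P3]
      simp
  · refine SetLike.lt_iff_le_and_exists.mpr ⟨fun w hw => ?_, Pi.single 2 1, ?_, ?_⟩
    · rw [mem_P4] at hw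
      rw [mem_P3]
      exact ⟨hw.1, hw.2.1⟩
    · rw [mem_P3]
      simp
    · rw [mem_P4]
      simp
  · rw [bot_lt_iff_ne_bot, Ne, Submodule.span_singleton_eq_bot]
    simp
  · refine ⟨?_, ?_, ?_, ?_, ?_, ?_⟩ <;> ext i <;> fin_cases i <;>
      simp [fa, fb, fc, fd, fx, fg]
  · refine ⟨?_, ?_, ?_, ?_, ?_, ?_⟩ <;> rw [mem_P4] <;>
      simp [fa, fb, fc, fd, fx, fg, v1, hinv]
  · refine ⟨?_, ?_, ?_, ?_, ?_, ?_⟩ <;> rw [mem_P3] <;>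
      simp [fa, fb, fc, fd, fx, fg, v3, h3, m3, hinv, inv_neg]
  · refine ⟨?_, ?_, ?_, ?_, ?_, ?_⟩ <;> rw [mem_P2] <;>
      simp [fa, fb, fc, fd, fx, fg]
end

section
/- P is a projective left D-module, and P₂ = span{p₂, p₃, p₄} is the unique maximal proper D-submodule of P, with P/P₂ ≅ k_{χ⁰}; hence P is a projective cover of the trivial module k_{χ⁰} = k_ε. -/
open scoped TensorProduct

variable (𝕜 : Type) [Field 𝕜] (ξ ν : 𝕜)

variable {𝕜 ξ ν}
variable {V W : Type} [AddCommGroup V] [Module 𝕜 V] [AddCommGroup W] [Module 𝕜 W]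

theorem drel_apply (ρ : DAlg 𝕜 ξ ν →ₐ[𝕜] Module.End 𝕜 V) {u v : FreeAlgebra 𝕜 DGen}
    (h : DRel 𝕜 ξ ν u v) (w : V) :
    ρ (RingQuot.mkAlgHom 𝕜 (DRel 𝕜 ξ ν) u) w = ρ (RingQuot.mkAlgHom 𝕜 (DRel 𝕜 ξ ν) v) w := by
  rw [RingQuot.mkAlgHom_rel 𝕜 h]

theorem dalg_induction (Q : DAlg 𝕜 ξ ν → Prop)
    (h0 : ∀ r : 𝕜, Q (algebraMap 𝕜 _ r)) (hadd : ∀ y z, Q y → Q z → Q (y + z))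
    (hmul : ∀ y z, Q y → Q z → Q (y * z))
    (hA : Q (gA 𝕜 ξ ν)) (hB : Q (gB 𝕜 ξ ν)) (hC : Q (gC 𝕜 ξ ν)) (hD : Q (gD 𝕜 ξ ν))
    (hX : Q (gX 𝕜 ξ ν)) (hG : Q (gG 𝕜 ξ ν)) (z : DAlg 𝕜 ξ ν) : Q z := by
  obtain ⟨y, rfl⟩ := RingQuot.mkAlgHom_surjective 𝕜 (DRel 𝕜 ξ ν) z
  induction y using FreeAlgebra.induction with
  | grade0 r => simpa using h0 r
  | grade1 t => cases t <;> assumption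
  | mul y z hy hz => rw [map_mul]; exact hmul _ _ hy hz
  | add y z hy hz => rw [map_add]; exact hadd _ _ hy hz

/-- If `w` is fixed by `a` and `g`, the universal property of `P`. -/
theorem lift_from_fixed (hξ : ξ * ξ = -1)
    (ρ : DAlg 𝕜 ξ ν →ₐ[𝕜] Module.End 𝕜 (Fin 4 → 𝕜))
    (hρ : POn ρ 0 (fun m => Pi.single m (1 : 𝕜)))
    (ρW : DAlg 𝕜 ξ ν →ₐ[𝕜] Module.End 𝕜 W) (w : W)
    (hAw : ρW (gA 𝕜 ξ ν) w = w) (hGw : ρW (gG 𝕜 ξ ν) w = w) :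
    ∃ σ : (Fin 4 → 𝕜) →ₗ[𝕜] W, (∀ z v, σ (ρ z v) = ρW z (σ v)) ∧
      σ (Pi.single 0 1) = w := by
  have ab := fun u => drel_apply ρW DRel.ab u
  have bd := fun u => drel_apply ρW DRel.bd u
  have cb := fun u => drel_apply ρW DRel.cb u
  have ad := fun u => drel_apply ρW DRel.adone u
  have adc := fun u => drel_apply ρW DRel.adcomm u
  have bsq := fun u => drel_apply ρW DRel.bsq u
  have aac := fun u => drel_apply ρW DRel.aac u
  have ac := fun u => drel_apply ρW DRel.ac u
  have xsq := fun u => drel_apply ρW DRel.xsq u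
  have gx := fun u => drel_apply ρW DRel.gx u
  have bg := fun u => drel_apply ρW DRel.bg u
  have axr := fun u => drel_apply ρW DRel.axr u
  have bxr := fun u => drel_apply ρW DRel.bxr u
  have cxr := fun u => drel_apply ρW DRel.cxr u
  have dxr := fun u => drel_apply ρW DRel.dxr u
  simp only [map_mul, map_smul, map_add, map_sub, map_neg, map_one, map_zero,
    Module.End.mul_apply, LinearMap.smul_apply, LinearMap.add_apply, LinearMap.sub_apply,
    LinearMap.neg_apply, LinearMap.zero_apply, Module.End.one_apply]
    at ab bd cb ad adc bsq aac ac xsq gx bg axr bxr cxr dxr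
  simp only [POn, ZMod.val_zero, pow_zero, zero_add, pow_one, inv_one, one_smul, mul_one,
    neg_smul] at hρ
  obtain ⟨a0, a1, a2, a3, b0, b1, b2, b3, c0, c1, c2, c3, d0, d1, d2, d3, x0, x1, x2, x3,
    g0, g1, g2, g3⟩ := hρ
  generalize hA : ρW (gA 𝕜 ξ ν) = A at *
  generalize hB : ρW (gB 𝕜 ξ ν) = B at *
  generalize hC : ρW (gC 𝕜 ξ ν) = C at *
  generalize hD : ρW (gD 𝕜 ξ ν) = D at *
  generalize hX : ρW (gX 𝕜 ξ ν) = X at *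
  generalize hG : ρW (gG 𝕜 ξ ν) = G at *
  rw [gA] at hA
  rw [gB] at hB
  rw [gC] at hC
  rw [gD] at hD
  rw [gX] at hX
  rw [gG] at hG
  rw [hA, hB] at ab
  simp only [hA, hB, hC, hD, hX, hG] at ab bd cb ad adc bsq aac ac xsq gx bg axr bxr cxr dxr
  have Dw : D w = w := by have := adc w; rw [ad, hAw] at this; exact this.symm
  have Cw : C w = -(B w) := by
    have h1 := aac w
    rw [ac, map_smul, ac, hAw, hAw, smul_smul, hξ] at h1
    rw [← h1]; simp
  have ABw : A (B w) = ξ • B w := by rw [ab, hAw]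
  have GBw : G (B w) = -(B w) := by rw [eq_neg_iff_add_eq_zero, add_comm, ← eq_neg_iff_add_eq_zero, ← bg, hGw]
  have DBw : D (B w) = -(ξ • B w) := by
    have h1 := bd w
    rw [Dw] at h1
    conv_rhs => rw [h1]
    rw [smul_smul, hξ]; simp
  have XXw : X (X w) = 0 := by rw [xsq, hGw, hGw, sub_self]
  have XXBw : X (X (B w)) = 0 := by simp [xsq, GBw]
  set q : Fin 4 → W := ![w, X w - ν • B w, B w, X (B w)] with hq
  set σ := (Pi.basisFun 𝕜 (Fin 4)).constr 𝕜 q with hσ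
  have s (m : Fin 4) : σ (Pi.single m 1) = q m := by
    rw [hσ, ← Pi.basisFun_apply, Module.Basis.constr_basis]
  have key (S : Module.End 𝕜 (Fin 4 → 𝕜)) (T : Module.End 𝕜 W)
      (h : ∀ m, σ (S (Pi.single m 1)) = T (q m)) (v : Fin 4 → 𝕜) : σ (S v) = T (σ v) := by
    have : σ ∘ₗ S = T ∘ₗ σ := by
      apply (Pi.basisFun 𝕜 (Fin 4)).ext
      intro m
      simp [h, s]
    exact LinearMap.congr_fun this v
  refine ⟨σ, ?_, s 0⟩
  intro z
  induction z using dalg_induction with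
  | h0 r => intro v; simp [Module.algebraMap_end_apply]
  | hadd y z hy hz => intro v; simp [hy, hz]
  | hmul y z hy hz => intro v; simp [hy, hz]
  | hA =>
    rw [gA, hA]; rw [gA] at a0 a1 a2 a3
    apply key
    intro m
    fin_cases m
    · simp [a0, s, q, hAw]
    · simp [a1, s, q, axr, hAw, Cw, GBw, ABw, cb, bsq]; module
    · simp [a2, s, q, ABw]
    · simp [a3, s, q, axr, ABw, cb, bsq, smul_smul, hξ]
  | hB =>
    rw [gB, hB]; rw [gB] at b0 b1 b2 b3
    apply key
    intro m
    fin_cases m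
    · simp [b0, s, q]
    · simp [b1, s, q, bxr, hAw, Dw, hGw, bsq]
    · simp [b2, q, bsq]
    · simp [b3, q, bxr, ABw, DBw, GBw, bsq]
  | hC =>
    rw [gC, hC]; rw [gC] at c0 c1 c2 c3
    apply key
    intro m
    fin_cases m
    · simp [c0, s, q, Cw]
    · simp [c1, s, q, cxr, hAw, Dw, hGw, Cw, cb]
    · simp [c2, q, cb]
    · simp [c3, q, cxr, ABw, DBw, GBw, cb]
  | hD =>
    rw [gD, hD]; rw [gD] at d0 d1 d2 d3
    apply key
    intro m
    fin_cases m
    · simp [d0, s, q, Dw]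
    · simp [d1, s, q, dxr, Dw, Cw, GBw, DBw]; module
    · simp [d2, s, q, DBw]
    · simp [d3, s, q, dxr, DBw, cb, bsq, smul_smul, hξ]
  | hX =>
    rw [gX, hX]; rw [gX] at x0 x1 x2 x3
    apply key
    intro m
    fin_cases m
    · simp [x0, s, q]
    · simp [x1, s, q, XXw]
    · simp [x2, s, q]
    · simp [x3, q, XXBw]
  | hG =>
    rw [gG, hG]; rw [gG] at g0 g1 g2 g3
    apply key
    intro m
    fin_cases m
    · simp [g0, s, q, hGw]
    · simp [g1, s, q, gx, hGw, GBw]; try abel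
    · simp [g2, s, q, GBw]
    · simp [g3, s, q, gx, GBw]

/-- `P` is a projective left `D`-module, and `P₂ = span{p₂, p₃, p₄}` is
the unique maximal proper `D`-submodule of `P`, with `P/P₂ ≅ 𝕜_{χ⁰}`; hence `P` is a
projective cover of the trivial module `𝕜_{χ⁰} = 𝕜_ε`. -/
theorem stmt_12 (𝕜 : Type) [Field 𝕜] [IsAlgClosed 𝕜] [CharZero 𝕜]
    (ξ ν : 𝕜) (hξ : IsPrimitiveRoot ξ 4) (hν : ν ^ 2 = 2)
    (ρ : DAlg 𝕜 ξ ν →ₐ[𝕜] Module.End 𝕜 (Fin 4 → 𝕜))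
    (hρ : POn ρ 0 (fun m => Pi.single m (1 : 𝕜))) :
    -- `P` is projective: every surjection of `D`-modules onto `P` splits `D`-linearly
    (∀ (W : Type) (_ : AddCommGroup W) (_ : Module 𝕜 W)
      (ρW : DAlg 𝕜 ξ ν →ₐ[𝕜] Module.End 𝕜 W) (π : W →ₗ[𝕜] Fin 4 → 𝕜),
      (∀ (z : DAlg 𝕜 ξ ν) (w : W), π (ρW z w) = ρ z (π w)) →
      Function.Surjective π →
      ∃ σ : (Fin 4 → 𝕜) →ₗ[𝕜] W,
        (∀ (z : DAlg 𝕜 ξ ν) (v : Fin 4 → 𝕜), σ (ρ z v) = ρW z (σ v)) ∧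
        π ∘ₗ σ = LinearMap.id) ∧
    -- `P₂` is the unique maximal proper `D`-submodule, and `P/P₂ ≅ 𝕜_{χ⁰}`
    (letI p : Fin 4 → (Fin 4 → 𝕜) := fun m => Pi.single m (1 : 𝕜)
     letI P₂ : Submodule 𝕜 (Fin 4 → 𝕜) :=
       Submodule.span 𝕜 {p 1, p 2, p 3}
     DInvariant ρ P₂ ∧ P₂ ≠ ⊤ ∧
     (∀ U : Submodule 𝕜 (Fin 4 → 𝕜), DInvariant ρ U → U ≠ ⊤ → U ≤ P₂) ∧
     -- `D` acts on the class of `p₁` in `P/P₂` through the trivial character `χ⁰`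
     (ρ (gA 𝕜 ξ ν) (p 0) - p 0 ∈ P₂ ∧ ρ (gB 𝕜 ξ ν) (p 0) ∈ P₂ ∧
      ρ (gC 𝕜 ξ ν) (p 0) ∈ P₂ ∧ ρ (gD 𝕜 ξ ν) (p 0) - p 0 ∈ P₂ ∧
      ρ (gX 𝕜 ξ ν) (p 0) ∈ P₂ ∧ ρ (gG 𝕜 ξ ν) (p 0) - p 0 ∈ P₂)) := by
  have hξ2 : ξ * ξ = -1 := by
    have h4 := hξ.pow_eq_one
    have h2 : ξ ^ 2 ≠ 1 := hξ.pow_ne_one_of_pos_of_lt (by norm_num) (by norm_num)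
    have : (ξ ^ 2 - 1) * (ξ * ξ + 1) = 0 := by linear_combination h4
    rcases mul_eq_zero.mp this with h | h
    · exact absurd (sub_eq_zero.mp h) h2
    · exact eq_neg_of_add_eq_zero_left h
  have hρ' := hρ
  simp only [POn, ZMod.val_zero, pow_zero, zero_add, pow_one, inv_one, one_smul, mul_one,
    neg_smul] at hρ'
  obtain ⟨a0, a1, a2, a3, b0, b1, b2, b3, c0, c1, c2, c3, d0, d1, d2, d3, x0, x1, x2, x3,
    g0, g1, g2, g3⟩ := hρ'
  have dec (v : Fin 4 → 𝕜) : v = v 0 • Pi.single 0 1 + v 1 • Pi.single 1 1 +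
      v 2 • Pi.single 2 1 + v 3 • Pi.single 3 1 := by
    ext i; fin_cases i <;> simp
  constructor
  · intro W _ _ ρW π hπ hsurj
    obtain ⟨w₀, hw₀⟩ := hsurj (Pi.single 0 1)
    have a4 := fun u => drel_apply ρW DRel.afour u
    have g4 := fun u => drel_apply ρW DRel.gfour u
    have ag := fun u => drel_apply ρW DRel.ag u
    simp only [map_mul, map_pow, map_one, Module.End.mul_apply, Module.End.one_apply,
      pow_succ, pow_zero, one_mul] at a4 g4 ag
    change ∀ u, ρW (gA 𝕜 ξ ν) (ρW (gA 𝕜 ξ ν) (ρW (gA 𝕜 ξ ν) (ρW (gA 𝕜 ξ ν) u))) = u at a4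
    change ∀ u, ρW (gG 𝕜 ξ ν) (ρW (gG 𝕜 ξ ν) (ρW (gG 𝕜 ξ ν) (ρW (gG 𝕜 ξ ν) u))) = u at g4
    change ∀ u, ρW (gA 𝕜 ξ ν) (ρW (gG 𝕜 ξ ν) u) = ρW (gG 𝕜 ξ ν) (ρW (gA 𝕜 ξ ν) u) at ag
    have pA := hπ (gA 𝕜 ξ ν)
    have pG := hπ (gG 𝕜 ξ ν)
    obtain ⟨w₁, hw₁, hA1⟩ : ∃ w₁, π w₁ = Pi.single 0 1 ∧ ρW (gA 𝕜 ξ ν) w₁ = w₁ := by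
      refine ⟨(1 / 4 : 𝕜) • (w₀ + ρW (gA 𝕜 ξ ν) w₀ + ρW (gA 𝕜 ξ ν) (ρW (gA 𝕜 ξ ν) w₀) +
        ρW (gA 𝕜 ξ ν) (ρW (gA 𝕜 ξ ν) (ρW (gA 𝕜 ξ ν) w₀))), ?_, ?_⟩
      · simp only [map_smul, map_add, pA, hw₀, a0]; module
      · simp only [map_smul, map_add, a4]; module
    obtain ⟨w, hw, hA, hG⟩ : ∃ w, π w = Pi.single 0 1 ∧ ρW (gA 𝕜 ξ ν) w = w ∧
        ρW (gG 𝕜 ξ ν) w = w := by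
      refine ⟨(1 / 4 : 𝕜) • (w₁ + ρW (gG 𝕜 ξ ν) w₁ + ρW (gG 𝕜 ξ ν) (ρW (gG 𝕜 ξ ν) w₁) +
        ρW (gG 𝕜 ξ ν) (ρW (gG 𝕜 ξ ν) (ρW (gG 𝕜 ξ ν) w₁))), ?_, ?_, ?_⟩
      · simp only [map_smul, map_add, pG, hw₁, g0]; module
      · simp only [map_smul, map_add, ag, hA1]
      · simp only [map_smul, map_add, g4]; module
    obtain ⟨σ, hσ, hσ0⟩ := lift_from_fixed hξ2 ρ hρ ρW w hA hG
    refine ⟨σ, hσ, ?_⟩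
    have e0 : π (σ (Pi.single 0 1)) = Pi.single 0 1 := by rw [hσ0, hw]
    have e2 : π (σ (Pi.single 2 1)) = Pi.single 2 1 := by
      rw [← b0, hσ, hπ, e0]
    have e3 : π (σ (Pi.single 3 1)) = Pi.single 3 1 := by
      rw [← x2, hσ, hπ, e2]
    have e1 : π (σ (Pi.single 1 1)) = Pi.single 1 1 := by
      have h1 : (Pi.single 1 1 : Fin 4 → 𝕜) =
        ρ (gX 𝕜 ξ ν) (Pi.single 0 1) - ν • Pi.single 2 1 := by rw [x0]; simp
      rw [h1, map_sub, map_sub, map_smul, map_smul, e2, hσ, hπ, e0]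
    apply (Pi.basisFun 𝕜 (Fin 4)).ext
    intro m
    fin_cases m <;> simp [e0, e1, e2, e3]
  · beta_reduce
    set P₂ : Submodule 𝕜 (Fin 4 → 𝕜) :=
      Submodule.span 𝕜 {Pi.single 1 1, Pi.single 2 1, Pi.single 3 1} with hP
    have m1 : (Pi.single 1 1 : Fin 4 → 𝕜) ∈ P₂ := Submodule.subset_span (by simp)
    have m2 : (Pi.single 2 1 : Fin 4 → 𝕜) ∈ P₂ := Submodule.subset_span (by simp)
    have m3 : (Pi.single 3 1 : Fin 4 → 𝕜) ∈ P₂ := Submodule.subset_span (by simp)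
    have mem (v : Fin 4 → 𝕜) : v ∈ P₂ ↔ v 0 = 0 := by
      constructor
      · intro hv
        have : P₂ ≤ LinearMap.ker (LinearMap.proj 0 : (Fin 4 → 𝕜) →ₗ[𝕜] 𝕜) := by
          rw [hP, Submodule.span_le]
          rintro u (rfl | rfl | rfl) <;> simp
        exact this hv
      · intro hv
        rw [dec v, hv, zero_smul, zero_add]
        exact P₂.add_mem (P₂.add_mem (P₂.smul_mem _ m1) (P₂.smul_mem _ m2)) (P₂.smul_mem _ m3)
    have key (S : Module.End 𝕜 (Fin 4 → 𝕜)) (h1 : S (Pi.single 1 1) ∈ P₂)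
        (h2 : S (Pi.single 2 1) ∈ P₂) (h3 : S (Pi.single 3 1) ∈ P₂) : ∀ v ∈ P₂, S v ∈ P₂ := by
      have : P₂ ≤ P₂.comap S := by
        refine Submodule.span_le.mpr ?_
        rintro u (rfl | rfl | rfl) <;> assumption
      exact this
    refine ⟨?_, ?_, ?_, ?_⟩
    · intro z
      induction z using dalg_induction with
      | h0 r =>
        intro v hv
        rw [AlgHom.commutes, Module.algebraMap_end_apply]
        exact P₂.smul_mem _ hv
      | hadd y z hy hz => intro v hv; rw [map_add]; exact P₂.add_mem (hy v hv) (hz v hv)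
      | hmul y z hy hz => intro v hv; rw [map_mul]; exact hy _ (hz v hv)
      | hA => apply key <;> simp [mem, a1, a2, a3]
      | hB => apply key <;> simp [mem, b1, b2, b3]
      | hC => apply key <;> simp [mem, c1, c2, c3]
      | hD => apply key <;> simp [mem, d1, d2, d3]
      | hX => apply key <;> simp [mem, x1, x2, x3]
      | hG => apply key <;> simp [mem, g1, g2, g3]
    · intro h
      have : (Pi.single 0 1 : Fin 4 → 𝕜) ∈ P₂ := by rw [h]; trivial
      rw [mem] at this
      simp at this
    · intro U hU hne u hu
      rw [mem]
      by_contra h0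
      apply hne
      have k1 : u 0 • (Pi.single 0 1 : Fin 4 → 𝕜) + u 3 • Pi.single 3 1 ∈ U := by
        have : u 0 • (Pi.single 0 1 : Fin 4 → 𝕜) + u 3 • Pi.single 3 1 =
            (1 / 2 : 𝕜) • (u + ρ (gG 𝕜 ξ ν) u) := by
          conv_rhs => rw [dec u]
          simp only [map_add, map_smul, g0, g1, g2, g3]
          module
        rw [this]
        exact U.smul_mem _ (U.add_mem hu (hU _ _ hu))
      have k2 : (Pi.single 2 1 : Fin 4 → 𝕜) ∈ U := by
        have := hU (gB 𝕜 ξ ν) _ k1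
        rw [map_add, map_smul, map_smul, b0, b3, smul_zero, add_zero] at this
        exact (U.smul_mem_iff h0).mp this
      have k3 : (Pi.single 3 1 : Fin 4 → 𝕜) ∈ U := x2 ▸ hU (gX 𝕜 ξ ν) _ k2
      have k0 : (Pi.single 0 1 : Fin 4 → 𝕜) ∈ U :=
        (U.smul_mem_iff h0).mp ((U.add_mem_iff_left (U.smul_mem _ k3)).mp k1)
      have k4 : (Pi.single 1 1 : Fin 4 → 𝕜) ∈ U := by
        have := hU (gX 𝕜 ξ ν) _ k0
        rw [x0] at this
        exact (U.add_mem_iff_left (U.smul_mem _ k2)).mp this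
      rw [eq_top_iff]
      intro v _
      rw [dec v]
      exact U.add_mem (U.add_mem (U.add_mem (U.smul_mem _ k0) (U.smul_mem _ k4))
        (U.smul_mem _ k2)) (U.smul_mem _ k3)
    · simp [mem, a0, b0, c0, d0, x0, g0]
end
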